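/- For every θ > 0 there exist a constant c(θ) > 0 and T₀ ≥ 1, depending only on θ, such that for all T ≥ T₀, d_Kol(√θ · √T · ρ(T), N(0,1)) ≤ c(θ) · ln(T)/√T. In particular, √θ · √T · ρ(T) converges in distribution to N(0,1) as T → ∞. -/

import Mathlib

open MeasureTheory ProbabilityTheory Real Filter Finset
open scoped Topology ENNReal NNReal

noncomputable section

/-- Kolmogorov distance between two Borel measures on `ℝ`. -/
def dKol (μ ν : Measure ℝ) : ℝ :=
  ⨆ z : ℝ, |(μ (Set.Iic z)).toReal - (ν (Set.Iic z)).toReal|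

/-- `X 0, X 1 : ℝ → Ω → ℝ` is a pair of independent centered Gaussian processes,
started at `0`, with almost surely continuous paths on `[0,∞)` and the
Ornstein–Uhlenbeck covariance `E[Xᵢ(s)Xᵢ(t)] = (e^{−θ|t−s|} − e^{−θ(t+s)})/(2θ)`. -/
structure IsOUPair {Ω : Type} [MeasureSpace Ω] (θ : ℝ) (X : Fin 2 → ℝ → Ω → ℝ) : Prop where
  meas : ∀ i t, Measurable (X i t)
  gaussian : ∀ (i : Fin 2) (n : ℕ) (t : Fin n → ℝ) (c : Fin n → ℝ), (∀ j, 0 ≤ t j) →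
      ∃ v : NNReal, Measure.map (fun ω => ∑ j, c j * X i (t j) ω) ℙ = gaussianReal 0 v
  indep : IndepFun (fun ω t => X 0 t ω) (fun ω t => X 1 t ω) ℙ
  cont : ∀ᵐ ω ∂(ℙ : Measure Ω), ∀ i, ContinuousOn (fun t => X i t ω) (Set.Ici 0)
  init : ∀ i ω, X i 0 ω = 0
  cov : ∀ (i : Fin 2) (s t : ℝ), 0 ≤ s → 0 ≤ t →
      ∫ ω, X i s ω * X i t ω ∂ℙ
        = (Real.exp (-θ * |t - s|) - Real.exp (-θ * (t + s))) / (2 * θ)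

variable {Ω : Type} [MeasureSpace Ω]

/-- `F_T := T^{-1/2} ∫₀^T X₁(u) X₂(u) du`. -/
def ouF (X : Fin 2 → ℝ → Ω → ℝ) (T : ℝ) (ω : Ω) : ℝ :=
  (1 / Real.sqrt T) * ∫ u in (0:ℝ)..T, X 0 u ω * X 1 u ω

/-- `X̄ᵢ(T) := T^{-1} ∫₀^T Xᵢ(u) du`. -/
def ouXbar (X : Fin 2 → ℝ → Ω → ℝ) (i : Fin 2) (T : ℝ) (ω : Ω) : ℝ :=
  (1 / T) * ∫ u in (0:ℝ)..T, X i u ω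

/-- `Y_{ij}(T) := ∫₀^T Xᵢ(u)Xⱼ(u) du − T·X̄ᵢ(T)·X̄ⱼ(T)`. -/
def ouY (X : Fin 2 → ℝ → Ω → ℝ) (i j : Fin 2) (T : ℝ) (ω : Ω) : ℝ :=
  (∫ u in (0:ℝ)..T, X i u ω * X j u ω) - T * ouXbar X i T ω * ouXbar X j T ω

/-- Yule's nonsense correlation `ρ(T)`. -/
def ouRho (X : Fin 2 → ℝ → Ω → ℝ) (T : ℝ) (ω : Ω) : ℝ :=
  ouY X 0 1 T ω / Real.sqrt (ouY X 0 0 T ω * ouY X 1 1 T ω)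

/-- `A(n) := (√Tₙ/n) Σ_{k<n} X₁(kΔ)X₂(kΔ)` with `Tₙ = nΔ`. -/
def ouA (X : Fin 2 → ℝ → Ω → ℝ) (n : ℕ) (Δ : ℝ) (ω : Ω) : ℝ :=
  (Real.sqrt (n * Δ) / n) * ∑ k ∈ Finset.range n, X 0 (k * Δ) ω * X 1 (k * Δ) ω

/-- `X̃ᵢ(n) := n^{-1} Σ_{k<n} Xᵢ(kΔ)`. -/
def ouXtilde (X : Fin 2 → ℝ → Ω → ℝ) (i : Fin 2) (n : ℕ) (Δ : ℝ) (ω : Ω) : ℝ :=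
  (1 / n) * ∑ k ∈ Finset.range n, X i (k * Δ) ω

/-- `Ỹ_{ij}(n) := Δ Σ_{k<n} Xᵢ(kΔ)Xⱼ(kΔ) − Tₙ·X̃ᵢ(n)·X̃ⱼ(n)` with `Tₙ = nΔ`. -/
def ouYtilde (X : Fin 2 → ℝ → Ω → ℝ) (i j : Fin 2) (n : ℕ) (Δ : ℝ) (ω : Ω) : ℝ :=
  Δ * ∑ k ∈ Finset.range n, X i (k * Δ) ω * X j (k * Δ) ω
    - (n * Δ) * ouXtilde X i n Δ ω * ouXtilde X j n Δ ω

/-- Yule's discrete nonsense correlation `ρ̃(n)`. -/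
def ouRhoTilde (X : Fin 2 → ℝ → Ω → ℝ) (n : ℕ) (Δ : ℝ) (ω : Ω) : ℝ :=
  ouYtilde X 0 1 n Δ ω / Real.sqrt (ouYtilde X 0 0 n Δ ω * ouYtilde X 1 1 n Δ ω)

/-!
Sample the processes on the grid `k Δ`, `k < n`, `n Δ = T`. The scaled sample vectors are `B g` and
`B h` with `g`, `h` independent standard normal and `B` chosen so that centering becomes diagonal:
`Ỹ₁₁ = ∑ mₖ gₖ²`, `Ỹ₁₂ = ∑ mₖ gₖ hₖ`, `Ỹ₂₂ = ∑ mₖ hₖ²`. Given `g`, the ratio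
`G = ∑ mₖ gₖ hₖ / √(∑ mₖ² gₖ²)` is exactly standard normal, and `√(θ T) ρ̃ = G W`, where `W` is a
function of `∑ mₖ gₖ²`, `∑ mₖ hₖ²` and `∑ mₖ² gₖ²`. The traces `∑ mₖ` and `∑ mₖ²` are `T / (2θ)` and
`T / (4θ³)` up to bounded errors, so by exponential moment bounds `W` is within `O(log T / √T)` of
`1`, except with probability `O(T⁻¹)`; perturbing a normal variable by such a factor costs as much
in Kolmogorov distance. All bounds are uniform in small meshes, and as `n → ∞` the Riemann sums
converge almost surely to the integrals; Kolmogorov balls are closed under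
convergence in distribution.
-/

section NormalCDF

local notation "Φ" => cdf (gaussianReal 0 1)

lemma abs_cdf_gaussianReal_sub_le {m : ℝ} {v : ℝ≥0} (hv : v ≠ 0) {a b M : ℝ}
    (hM : ∀ x ∈ Set.uIoc a b, gaussianPDFReal m v x ≤ M) :
    |cdf (gaussianReal m v) b - cdf (gaussianReal m v) a| ≤ M * |b - a| := by
  have cdf_eq (x : ℝ) :
      cdf (gaussianReal m v) x = ∫ y in Set.Iic x, gaussianPDFReal m v y := by
    rw [cdf_eq_real, measureReal_def, gaussianReal_apply_eq_integral m hv, ENNReal.toReal_ofReal]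
    exact setIntegral_nonneg measurableSet_Iic fun y _ => gaussianPDFReal_nonneg m v y
  have integrable := integrable_gaussianPDFReal m v
  rw [cdf_eq, cdf_eq,
    intervalIntegral.integral_Iic_sub_Iic integrable.integrableOn integrable.integrableOn,
    ← Real.norm_eq_abs]
  refine intervalIntegral.norm_integral_le_of_norm_le_const fun x hx => ?_
  rw [Real.norm_of_nonneg (gaussianPDFReal_nonneg m v x)]
  exact hM x hx

lemma gaussianPDFReal_zero_one_le_exp (x : ℝ) :
    gaussianPDFReal 0 1 x ≤ exp (-(x ^ 2 / 2)) := by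
  have h : (√(2 * π))⁻¹ ≤ 1 :=
    inv_le_one_of_one_le₀ (Real.one_le_sqrt.2 (by linarith [Real.pi_gt_three]))
  rw [gaussianPDFReal_def]
  simpa [neg_div] using mul_le_mul_of_nonneg_right h (exp_pos (-(x ^ 2 / 2))).le

lemma abs_cdf_gaussianReal_mul_sub_le {a z : ℝ} (ha : |a - 1| ≤ 1 / 2) :
    |Φ (a * z) - Φ z| ≤ 2 * |a - 1| := by
  have half_le : ∀ x ∈ Set.uIoc z (a * z), |z / 2| ≤ |x| := by
    obtain ⟨_, _⟩ := abs_le.1 ha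
    rintro x ⟨hl, hr⟩
    rcases le_total 0 z with hz | hz
    · have : z / 2 ≤ z ⊓ (a * z) := le_inf (by linarith) (by nlinarith)
      exact abs_le_abs_of_nonneg (by linarith) (by linarith)
    · have : z ⊔ (a * z) ≤ z / 2 := sup_le (by linarith) (by nlinarith)
      exact abs_le_abs_of_nonpos (by linarith) (by linarith)
  have pdf_le : ∀ x ∈ Set.uIoc z (a * z), gaussianPDFReal 0 1 x ≤ (1 + z ^ 2 / 8)⁻¹ := by
    intro x hx
    have hsq : z ^ 2 / 8 ≤ x ^ 2 / 2 := by linarith [sq_le_sq.2 (half_le x hx)]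
    calc gaussianPDFReal 0 1 x ≤ exp (-(x ^ 2 / 2)) := gaussianPDFReal_zero_one_le_exp x
      _ = (exp (x ^ 2 / 2))⁻¹ := exp_neg _
      _ ≤ (1 + z ^ 2 / 8)⁻¹ :=
        inv_anti₀ (by positivity) (by linarith [Real.add_one_le_exp (x ^ 2 / 2)])
  have abs_le_two_mul : |z| ≤ 2 * (1 + z ^ 2 / 8) := by
    rw [← sq_abs z]; nlinarith [sq_nonneg (|z| - 2)]
  calc |Φ (a * z) - Φ z|
      ≤ (1 + z ^ 2 / 8)⁻¹ * |a * z - z| := abs_cdf_gaussianReal_sub_le one_ne_zero pdf_le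
    _ = |a - 1| * ((1 + z ^ 2 / 8)⁻¹ * |z|) := by rw [← sub_one_mul, abs_mul]; ring
    _ ≤ |a - 1| * 2 := by
      gcongr
      rwa [inv_mul_le_iff₀ (by positivity), mul_comm]
    _ = 2 * |a - 1| := mul_comm _ _

lemma exists_mul_le_sandwich {δ : ℝ} (h₀ : 0 ≤ δ) (h₁ : δ ≤ 1 / 3) (z : ℝ) :
    ∃ a b : ℝ, |a - 1| ≤ 3 / 2 * δ ∧ |b - 1| ≤ 3 / 2 * δ ∧
      ∀ g w : ℝ, |w - 1| ≤ δ → (g ≤ a * z → g * w ≤ z) ∧ (g * w ≤ z → g ≤ b * z) := by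
  have inv_add : |(1 + δ)⁻¹ - 1| ≤ 3 / 2 * δ := by
    rw [show (1 + δ)⁻¹ - 1 = -(δ * (1 + δ)⁻¹) by field_simp; ring, abs_neg,
      abs_of_nonneg (by positivity), mul_comm]
    gcongr
    exact (inv_le_one_of_one_le₀ (by linarith)).trans (by norm_num)
  have inv_sub : |(1 - δ)⁻¹ - 1| ≤ 3 / 2 * δ := by
    have hpos : 0 < 1 - δ := by linarith
    rw [show (1 - δ)⁻¹ - 1 = δ * (1 - δ)⁻¹ by field_simp; ring,
      abs_of_nonneg (by positivity), mul_comm]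
    gcongr
    rw [inv_le_comm₀ hpos (by norm_num)]
    linarith
  have inv_mem {w : ℝ} (hw : |w - 1| ≤ δ) :
      0 < w ∧ (1 + δ)⁻¹ ≤ w⁻¹ ∧ w⁻¹ ≤ (1 - δ)⁻¹ := by
    obtain ⟨_, _⟩ := abs_le.1 hw
    have hpos : 0 < w := by linarith
    exact ⟨hpos, inv_anti₀ hpos (by linarith), inv_anti₀ (by linarith) (by linarith)⟩
  have mul_le_iff {g w : ℝ} (hw : 0 < w) : g * w ≤ z ↔ g ≤ w⁻¹ * z := by
    rw [← le_div_iff₀ hw, div_eq_inv_mul]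
  rcases le_total 0 z with hz | hz
  · refine ⟨_, _, inv_add, inv_sub, fun g w hw => ?_⟩
    obtain ⟨hpos, hl, hr⟩ := inv_mem hw
    rw [mul_le_iff hpos]
    exact ⟨fun h => h.trans (mul_le_mul_of_nonneg_right hl hz),
      fun h => h.trans (mul_le_mul_of_nonneg_right hr hz)⟩
  · refine ⟨_, _, inv_sub, inv_add, fun g w hw => ?_⟩
    obtain ⟨hpos, hl, hr⟩ := inv_mem hw
    rw [mul_le_iff hpos]
    exact ⟨fun h => h.trans (mul_le_mul_of_nonpos_right hr hz),
      fun h => h.trans (mul_le_mul_of_nonpos_right hl hz)⟩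

end NormalCDF

section KolmogorovDistance

lemma dKol_le_iff {μ ν : Measure ℝ} [IsProbabilityMeasure μ] [IsProbabilityMeasure ν] {ε : ℝ} :
    dKol μ ν ≤ ε ↔ ∀ z, |cdf μ z - cdf ν z| ≤ ε := by
  simp only [cdf_eq_real, measureReal_def]
  refine ciSup_le_iff ⟨1, ?_⟩
  rintro _ ⟨z, rfl⟩
  exact abs_sub_le_of_nonneg_of_le measureReal_nonneg measureReal_le_one measureReal_nonneg
    measureReal_le_one

lemma dKol_nonneg (μ ν : Measure ℝ) : 0 ≤ dKol μ ν :=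
  Real.iSup_nonneg fun _ => abs_nonneg _

lemma dKol_le_of_tendsto {ι : Type*} {l : Filter ι} [l.NeBot] {μ : ι → ProbabilityMeasure ℝ}
    {μ' : ProbabilityMeasure ℝ} (hμ : Tendsto μ l (𝓝 μ')) {ν : Measure ℝ}
    [IsProbabilityMeasure ν] {ε : ℝ} (hε : ∀ᶠ i in l, dKol (μ i) ν ≤ ε) : dKol μ' ν ≤ ε := by
  have cdf_near : ∀ᶠ i in l, ∀ z, |cdf (μ i) z - cdf ν z| ≤ ε :=
    hε.mono fun i hi => dKol_le_iff.1 hi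
  have ε_nonneg : 0 ≤ ε := hε.exists.elim fun i hi => (dKol_nonneg _ _).trans hi
  refine dKol_le_iff.2 fun z => abs_sub_le_iff.2 ⟨?_, ?_⟩
  · suffices ∀ w > z, cdf μ' z ≤ cdf ν w + ε by
      have right_limit : Tendsto (fun w => cdf ν w + ε) (𝓝[>] z) (𝓝 (cdf ν z + ε)) :=
        (((cdf ν).right_continuous z).mono Set.Ioi_subset_Ici_self).tendsto.add_const ε
      linarith [ge_of_tendsto right_limit (eventually_mem_nhdsWithin.mono this)]
    intro w hw
    rw [← ENNReal.ofReal_le_ofReal_iff (add_nonneg (cdf_nonneg ν w) ε_nonneg), ofReal_cdf]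
    calc (μ' : Measure ℝ) (Set.Iic z) ≤ (μ' : Measure ℝ) (Set.Iio w) :=
          measure_mono (Set.Iic_subset_Iio.2 hw)
      _ ≤ liminf (fun i => (μ i : Measure ℝ) (Set.Iio w)) l :=
          ProbabilityMeasure.le_liminf_measure_open_of_tendsto hμ isOpen_Iio
      _ ≤ limsup (fun i => (μ i : Measure ℝ) (Set.Iio w)) l := liminf_le_limsup
      _ ≤ ENNReal.ofReal (cdf ν w + ε) := by
          refine limsup_le_of_le (h := cdf_near.mono fun i hi => ?_)
          refine (measure_mono Set.Iio_subset_Iic_self).trans ?_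
          rw [← ofReal_cdf]
          exact ENNReal.ofReal_le_ofReal (by linarith [(abs_le.1 (hi w)).2])
  · suffices cdf ν z - ε ≤ cdf μ' z by linarith
    rw [← ENNReal.ofReal_le_ofReal_iff (cdf_nonneg _ z), ofReal_cdf]
    refine le_trans ?_
      (ProbabilityMeasure.limsup_measure_closed_le_of_tendsto hμ (isClosed_Iic (a := z)))
    refine le_limsup_of_frequently_le (cdf_near.mono fun i hi => ?_).frequently
    rw [← ofReal_cdf]
    exact ENNReal.ofReal_le_ofReal (by linarith [(abs_le.1 (hi z)).1])

lemma cdf_eq_measureReal_of_hasLaw {α : Type*} [MeasurableSpace α] {μ : Measure α} {Z : α → ℝ}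
    {ν : Measure ℝ} [IsProbabilityMeasure ν] (hZ : HasLaw Z ν μ) (z : ℝ) :
    cdf ν z = μ.real {a | Z a ≤ z} := by
  rw [cdf_eq_real, hZ.measureReal_eq measurableSet_Iic]
  rfl

lemma dKol_map_mul_gaussianReal_le {α : Type*} [MeasurableSpace α] {μ : Measure α}
    [IsProbabilityMeasure μ] {G W : α → ℝ} (hG : HasLaw G (gaussianReal 0 1) μ)
    (hW : AEMeasurable W μ) {δ : ℝ} (h₀ : 0 ≤ δ) (h₁ : δ ≤ 1 / 3) :
    dKol (μ.map fun a => G a * W a) (gaussianReal 0 1)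
      ≤ 3 * δ + μ.real {a | δ < |W a - 1|} := by
  have aemeasurable_mul : AEMeasurable (fun a => G a * W a) μ := hG.aemeasurable.mul hW
  have : IsProbabilityMeasure (μ.map fun a => G a * W a) :=
    Measure.isProbabilityMeasure_map aemeasurable_mul
  refine dKol_le_iff.2 fun z => ?_
  obtain ⟨a, b, ha, hb, sandwich⟩ := exists_mul_le_sandwich h₀ h₁ z
  have cdf_scale {c : ℝ} (hc : |c - 1| ≤ 3 / 2 * δ) :=
    abs_le.1 ((abs_cdf_gaussianReal_mul_sub_le (z := z) (hc.trans (by linarith))).trans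
      (mul_le_mul_of_nonneg_left hc zero_le_two))
  have le_union {s t : Set α} (hst : s ⊆ t ∪ {a | δ < |W a - 1|}) :
      μ.real s ≤ μ.real t + μ.real {a | δ < |W a - 1|} :=
    (measureReal_mono hst).trans (measureReal_union_le _ _)
  have lower := le_union (s := {x | G x ≤ a * z}) (t := {x | G x * W x ≤ z}) fun x hx =>
    (le_or_gt |W x - 1| δ).imp (fun hw => (sandwich _ _ hw).1 hx) id
  have upper := le_union (s := {x | G x * W x ≤ z}) (t := {x | G x ≤ b * z}) fun x hx =>
    (le_or_gt |W x - 1| δ).imp (fun hw => (sandwich _ _ hw).2 hx) id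
  rw [← cdf_eq_measureReal_of_hasLaw ⟨aemeasurable_mul, rfl⟩ z,
    ← cdf_eq_measureReal_of_hasLaw hG] at lower upper
  exact abs_le.2 ⟨by linarith [(cdf_scale ha).1], by linarith [(cdf_scale hb).2]⟩

end KolmogorovDistance

lemma abs_sqrt_sub_one_le {x : ℝ} (hx : 0 ≤ x) : |√x - 1| ≤ |x - 1| := by
  have h : x - 1 = (√x - 1) * (√x + 1) := by linarith [Real.mul_self_sqrt hx]
  rw [h, abs_mul, abs_of_pos (by positivity : 0 < √x + 1)]
  exact le_mul_of_one_le_right (abs_nonneg _) (by linarith [Real.sqrt_nonneg x])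

lemma abs_sqrt_div_mul_sub_one_le {a b v η : ℝ} (hη : η ≤ 1 / 12) (ha : |a - 1| ≤ η)
    (hb : |b - 1| ≤ η) (hv : |v - 1| ≤ η) : |√(v / (a * b)) - 1| ≤ 4 * η := by
  obtain ⟨_, _⟩ := abs_le.1 ha
  obtain ⟨_, _⟩ := abs_le.1 hb
  obtain ⟨_, _⟩ := abs_le.1 hv
  have lower : (1 - η) * (1 - η) ≤ a * b := by gcongr <;> linarith
  have upper : a * b ≤ (1 + η) * (1 + η) := by gcongr <;> linarith
  have hη₀ : 0 ≤ η := (abs_nonneg _).trans ha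
  have hab : 5 / 6 ≤ a * b := by nlinarith
  have hpos : 0 < a * b := by linarith
  have key : 4 * η * (5 / 6) ≤ 4 * η * (a * b) := by gcongr
  refine (abs_sqrt_sub_one_le (div_nonneg (by linarith) hpos.le)).trans ?_
  rw [div_sub_one hpos.ne', abs_div, abs_of_pos hpos, div_le_iff₀ hpos, abs_le]
  constructor <;> nlinarith

section GaussianVector

/-- The law on `ι → ℝ` of a vector with independent standard normal coordinates. -/
abbrev gaussianPi (ι : Type*) [Fintype ι] : Measure (ι → ℝ) :=
  Measure.pi fun _ => gaussianReal 0 1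

variable {ι : Type*} [Fintype ι]

lemma map_sum_mul_gaussianPi (a : ι → ℝ) :
    (gaussianPi ι).map (fun h => ∑ i, a i * h i)
      = gaussianReal 0 (∑ i, a i ^ 2).toNNReal := by
  have inner_eq : (fun h : ι → ℝ => ∑ i, a i * h i)
      = innerSL ℝ (WithLp.toLp 2 a) ∘ WithLp.toLp 2 := by
    ext h
    simp [PiLp.inner_apply, mul_comm]
  rw [inner_eq, ← Measure.map_map (by fun_prop) (by fun_prop), map_pi_eq_stdGaussian,
    IsGaussian.map_eq_gaussianReal, integral_strongDual_stdGaussian, variance_dual_stdGaussian,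
    innerSL_apply_norm, EuclideanSpace.real_norm_sq_eq]

lemma hasLaw_sum_mul_div_sqrt {a : ι → ℝ} (ha : a ≠ 0) :
    HasLaw (fun h => (∑ i, a i * h i) / √(∑ i, a i ^ 2)) (gaussianReal 0 1) (gaussianPi ι) where
  aemeasurable := Measurable.aemeasurable (by fun_prop)
  map_eq := by
    have hpos : 0 < ∑ i, a i ^ 2 := by
      obtain ⟨i, hi⟩ := Function.ne_iff.1 ha
      exact Finset.sum_pos' (fun j _ => sq_nonneg _) ⟨i, mem_univ i, sq_pos_of_ne_zero hi⟩
    change (gaussianPi ι).map ((· / √(∑ i, a i ^ 2)) ∘ fun h => ∑ i, a i * h i) = _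
    rw [← Measure.map_map (by fun_prop) (by fun_prop), map_sum_mul_gaussianPi,
      gaussianReal_map_div_const]
    congr 1
    · simp
    · ext
      simp [Real.sq_sqrt hpos.le, hpos.le, hpos.ne']

lemma hasLaw_prod_of_ae_hasLaw {α β γ : Type*} [MeasurableSpace α] [MeasurableSpace β]
    [MeasurableSpace γ] {μ : Measure α} [IsProbabilityMeasure μ] {ν : Measure β} [SFinite ν]
    {ρ : Measure γ} {f : α × β → γ} (hf : Measurable f)
    (h : ∀ᵐ x ∂μ, HasLaw (fun y => f (x, y)) ρ ν) : HasLaw f ρ (μ.prod ν) where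
  map_eq := by
    ext s hs
    rw [Measure.map_apply hf hs, Measure.prod_apply (hf hs)]
    calc ∫⁻ x, ν (Prod.mk x ⁻¹' (f ⁻¹' s)) ∂μ = ∫⁻ _, ρ s ∂μ :=
          lintegral_congr_ae (h.mono fun x hx => hx.measure_eq hs)
      _ = ρ s := by simp

lemma hasLaw_selfNormalized_bilinear {m : ι → ℝ} (hm : m ≠ 0) :
    HasLaw (fun p : (ι → ℝ) × (ι → ℝ) =>
        (∑ i, m i * p.1 i * p.2 i) / √(∑ i, (m i * p.1 i) ^ 2))
      (gaussianReal 0 1) ((gaussianPi ι).prod (gaussianPi ι)) := by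
  refine hasLaw_prod_of_ae_hasLaw (by fun_prop) ?_
  obtain ⟨i, hi⟩ := Function.ne_iff.1 hm
  have := nullSingletonClass_gaussianReal (μ := 0) (v := 1) one_ne_zero
  filter_upwards [Measure.ae_eval_ne (μ := fun _ : ι => gaussianReal 0 1) i 0] with h hh
  exact hasLaw_sum_mul_div_sqrt (a := fun j => m j * h j)
    (Function.ne_iff.2 ⟨i, mul_ne_zero hi hh⟩)

end GaussianVector

section ChiSquareConcentration

lemma inv_one_sub_le_exp {y : ℝ} (h : |y| ≤ 1 / 4) : (1 - y)⁻¹ ≤ exp (y + y ^ 2) := by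
  obtain ⟨_, _⟩ := abs_le.1 h
  rw [inv_le_iff_one_le_mul₀ (by linarith)]
  rcases le_total 0 y with hy | hy
  · have quadratic := Real.quadratic_le_exp_of_nonneg (by positivity : 0 ≤ y + y ^ 2)
    calc 1 ≤ (1 + (y + y ^ 2) + (y + y ^ 2) ^ 2 / 2) * (1 - y) := by
          have : 0 ≤ y ^ 2 * (1 / 2 - y / 2 * (1 + y + y ^ 2)) :=
            mul_nonneg (sq_nonneg y) (by nlinarith)
          nlinarith
      _ ≤ exp (y + y ^ 2) * (1 - y) := by gcongr; linarith
  · calc 1 ≤ (y + y ^ 2 + 1) * (1 - y) := by nlinarith [mul_nonneg (sq_nonneg y) (neg_nonneg.2 hy)]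
      _ ≤ exp (y + y ^ 2) * (1 - y) := by gcongr; exacts [by linarith, Real.add_one_le_exp _]

lemma gaussianPDFReal_mul_exp_sq_sub_one (s x : ℝ) :
    gaussianPDFReal 0 1 x * exp (s * (x ^ 2 - 1))
      = (√(2 * π))⁻¹ * exp (-s) * exp (-(1 / 2 - s) * x ^ 2) := by
  rw [gaussianPDFReal_def]
  simp only [NNReal.coe_one, mul_one, sub_zero]
  rw [mul_assoc, mul_assoc, ← Real.exp_add, ← Real.exp_add]
  congr 2; ring

lemma integrable_exp_mul_sq_sub_one {s : ℝ} (hs : s < 1 / 2) :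
    Integrable (fun x => exp (s * (x ^ 2 - 1))) (gaussianReal 0 1) := by
  rw [gaussianReal_of_var_ne_zero 0 one_ne_zero, gaussianPDF_def,
    integrable_withDensity_iff_integrable_smul₀'
      (measurable_gaussianPDFReal 0 1).ennreal_ofReal.aemeasurable (by simp)]
  simp only [ENNReal.toReal_ofReal (gaussianPDFReal_nonneg 0 1 _), smul_eq_mul,
    gaussianPDFReal_mul_exp_sq_sub_one]
  exact (integrable_exp_neg_mul_sq (by linarith)).const_mul _

lemma integral_exp_mul_sq_sub_one {s : ℝ} (hs : s < 1 / 2) :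
    ∫ x, exp (s * (x ^ 2 - 1)) ∂(gaussianReal 0 1) = exp (-s) * √((1 - 2 * s)⁻¹) := by
  have hpos : 0 < 1 - 2 * s := by linarith
  have hsplit : π / (1 / 2 - s) = 2 * π * (1 - 2 * s)⁻¹ := by
    rw [show 1 / 2 - s = (1 - 2 * s) / 2 by ring]
    field_simp
  rw [integral_gaussianReal_eq_integral_smul one_ne_zero]
  simp only [smul_eq_mul, gaussianPDFReal_mul_exp_sq_sub_one]
  rw [integral_const_mul, integral_gaussian, hsplit, Real.sqrt_mul two_pi_pos.le,
    mul_comm (√(2 * π))⁻¹, mul_assoc, inv_mul_cancel_left₀ (by positivity)]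

lemma integral_exp_mul_sq_sub_one_le {s : ℝ} (hs : |s| ≤ 1 / 8) :
    ∫ x, exp (s * (x ^ 2 - 1)) ∂(gaussianReal 0 1) ≤ exp (2 * s ^ 2) := by
  have sqrt_le : √((1 - 2 * s)⁻¹) ≤ exp (s + 2 * s ^ 2) := by
    rw [Real.sqrt_le_left (by positivity), ← Real.exp_nat_mul]
    refine (inv_one_sub_le_exp (by rw [abs_mul, abs_two]; linarith)).trans_eq ?_
    congr 1; push_cast; ring
  calc _ = exp (-s) * √((1 - 2 * s)⁻¹) :=
        integral_exp_mul_sq_sub_one (by linarith [(abs_le.1 hs).2])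
    _ ≤ exp (-s) * exp (s + 2 * s ^ 2) := by gcongr
    _ = exp (2 * s ^ 2) := by rw [← Real.exp_add]; congr 1; ring

variable {ι : Type*} [Fintype ι]

lemma measureReal_le_sum_mul_sq_sub_one (a : ι → ℝ) {t : ℝ} (ht : 0 ≤ t)
    (ha : ∀ i, |t * a i| ≤ 1 / 8) (u : ℝ) :
    (gaussianPi ι).real {h | u ≤ ∑ i, a i * (h i ^ 2 - 1)}
      ≤ exp (-t * u + 2 * t ^ 2 * ∑ i, a i ^ 2) := by
  have exp_eq_prod : (fun h : ι → ℝ => exp (t * ∑ i, a i * (h i ^ 2 - 1)))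
      = fun h => ∏ i, exp (t * a i * (h i ^ 2 - 1)) := by
    ext h
    simp only [Finset.mul_sum, Real.exp_sum, mul_assoc]
  have integrable : Integrable (fun h => exp (t * ∑ i, a i * (h i ^ 2 - 1))) (gaussianPi ι) := by
    rw [exp_eq_prod]
    exact Integrable.fintype_prod (f := fun i x => exp (t * a i * (x ^ 2 - 1))) fun i =>
      integrable_exp_mul_sq_sub_one (by linarith [(abs_le.1 (ha i)).2])
  have mgf_le : mgf (fun h => ∑ i, a i * (h i ^ 2 - 1)) (gaussianPi ι) t
      ≤ exp (2 * t ^ 2 * ∑ i, a i ^ 2) :=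
    calc _ = ∏ i, ∫ x, exp (t * a i * (x ^ 2 - 1)) ∂(gaussianReal 0 1) := by
          rw [mgf, exp_eq_prod,
            integral_fintype_prod_eq_prod (fun i x => exp (t * a i * (x ^ 2 - 1)))]
      _ ≤ ∏ i, exp (2 * (t * a i) ^ 2) :=
          Finset.prod_le_prod (fun i _ => integral_nonneg fun x => (exp_pos _).le)
            fun i _ => integral_exp_mul_sq_sub_one_le (ha i)
      _ = exp (2 * t ^ 2 * ∑ i, a i ^ 2) := by
          simp only [← Real.exp_sum, Finset.mul_sum, mul_pow, mul_assoc]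
  calc _ ≤ exp (-t * u) * _ := measure_ge_le_exp_mul_mgf u ht integrable
    _ ≤ exp (-t * u) * exp (2 * t ^ 2 * ∑ i, a i ^ 2) := by gcongr
    _ = _ := (Real.exp_add _ _).symm

lemma measureReal_le_abs_sum_mul_sq_sub_sum (a : ι → ℝ) {t : ℝ} (ht : 0 ≤ t)
    (ha : ∀ i, |t * a i| ≤ 1 / 8) (u : ℝ) :
    (gaussianPi ι).real {h | u ≤ |∑ i, a i * h i ^ 2 - ∑ i, a i|}
      ≤ 2 * exp (-t * u + 2 * t ^ 2 * ∑ i, a i ^ 2) := by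
  have upper_tail := measureReal_le_sum_mul_sq_sub_one a ht ha u
  have lower_tail := measureReal_le_sum_mul_sq_sub_one (fun i => -a i) ht (by simpa using ha) u
  have subset_union : {h : ι → ℝ | u ≤ |∑ i, a i * h i ^ 2 - ∑ i, a i|} ⊆
      {h | u ≤ ∑ i, a i * (h i ^ 2 - 1)} ∪ {h | u ≤ ∑ i, -a i * (h i ^ 2 - 1)} := by
    intro h hh
    simp only [Set.mem_union, Set.mem_ofPred_eq, neg_mul, Finset.sum_neg_distrib, mul_sub, mul_one,
      Finset.sum_sub_distrib]
    rw [← neg_sub']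
    exact le_abs.1 hh
  simp only [neg_sq] at lower_tail
  linarith [(measureReal_mono (μ := gaussianPi ι) subset_union).trans (measureReal_union_le _ _)]

end ChiSquareConcentration

section WeightedChiSquare

variable {ι : Type*} [Fintype ι]

lemma measureReal_relError_sum_mul_sq_le {C D κ T : ℝ} (hκ : 0 < κ) (hT : exp 1 ≤ T)
    (hC : 8 * C ≤ √T) {a : ι → ℝ} (ha : ∀ i, |a i| ≤ C) (hsum : |∑ i, a i - κ * T| ≤ C)
    (hsq : ∑ i, a i ^ 2 ≤ D * T) :
    (gaussianPi ι).real {h | 2 / κ * (log T / √T) < |(∑ i, a i * h i ^ 2) / (κ * T) - 1|}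
      ≤ 2 * exp (2 * D) * (log T / √T) := by
  have one_le_log : 1 ≤ log T := (Real.le_log_iff_exp_le ((exp_pos 1).trans_le hT)).2 hT
  have one_le_T : 1 ≤ T := (Real.one_le_exp zero_le_one).trans hT
  have one_le_sqrt : 1 ≤ √T := Real.one_le_sqrt.2 one_le_T
  have sq_sqrt : √T ^ 2 = T := Real.sq_sqrt (by linarith)
  have subset : {h : ι → ℝ | 2 / κ * (log T / √T) < |(∑ i, a i * h i ^ 2) / (κ * T) - 1|}
      ⊆ {h | √T * log T ≤ |∑ i, a i * h i ^ 2 - ∑ i, a i|} := by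
    intro h (hh : 2 / κ * (log T / √T) < |(∑ i, a i * h i ^ 2) / (κ * T) - 1|)
    have rate_eq : 2 / κ * (log T / √T) * (κ * T) = 2 * (√T * log T) := by
      rw [← sq_sqrt, Real.sqrt_sq (by linarith)]; field_simp
    rw [div_sub_one (by positivity), abs_div, abs_of_pos (by positivity : 0 < κ * T),
      lt_div_iff₀ (by positivity), rate_eq] at hh
    have : C ≤ √T * log T := by nlinarith [(abs_nonneg _).trans hsum]
    change √T * log T ≤ |∑ i, a i * h i ^ 2 - ∑ i, a i|
    linarith [abs_sub_le (∑ i, a i * h i ^ 2) (∑ i, a i) (κ * T)]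
  have tail := measureReal_le_abs_sum_mul_sq_sub_sum a (t := (√T)⁻¹) (by positivity)
    (fun i => by
      rw [abs_mul, abs_of_pos (by positivity), inv_mul_le_iff₀ (by positivity)]
      linarith [ha i]) (√T * log T)
  have exponent_le : -(√T)⁻¹ * (√T * log T) + 2 * (√T)⁻¹ ^ 2 * ∑ i, a i ^ 2
      ≤ 2 * D - log T := by
    rw [neg_mul, inv_mul_cancel_left₀ (by positivity), inv_pow, sq_sqrt, mul_assoc]
    linarith [(inv_mul_le_iff₀' (by linarith : 0 < T)).2 hsq]
  calc _ ≤ 2 * exp (2 * D - log T) :=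
        (measureReal_mono subset).trans (tail.trans (by gcongr))
    _ = 2 * exp (2 * D) * (1 / T) := by
        rw [Real.exp_sub, Real.exp_log (by linarith)]; ring
    _ ≤ 2 * exp (2 * D) * (log T / √T) := by
        gcongr
        rw [← sq_sqrt, Real.sqrt_sq (by linarith)]
        nlinarith

/-- The diagonal weights `m` of a pair of simultaneously diagonalized quadratic forms, at time
horizon `T`: they are nonnegative, bounded by `C`, and their sum and their sum of squares are
`α T` and `β T` up to an error `C`. -/
structure WeightBounds (C α β T : ℝ) (m : ι → ℝ) : Prop where
  nonneg : ∀ i, 0 ≤ m i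
  le : ∀ i, m i ≤ C
  abs_sum_sub_le : |∑ i, m i - α * T| ≤ C
  abs_sum_sq_sub_le : |∑ i, m i ^ 2 - β * T| ≤ C

namespace WeightBounds

variable {C α β T : ℝ} {m : ι → ℝ}

lemma const_nonneg (hm : WeightBounds C α β T m) : 0 ≤ C :=
  (abs_nonneg _).trans hm.abs_sum_sub_le

lemma sum_sq_le (hm : WeightBounds C α β T m) (hT : 1 ≤ T) : ∑ i, m i ^ 2 ≤ (β + C) * T := by
  nlinarith [(abs_le.1 hm.abs_sum_sq_sub_le).2, hm.const_nonneg]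

lemma sum_sq_sq_le (hm : WeightBounds C α β T m) (hT : 1 ≤ T) :
    ∑ i, (m i ^ 2) ^ 2 ≤ C ^ 2 * (β + C) * T :=
  calc ∑ i, (m i ^ 2) ^ 2 ≤ ∑ i, C ^ 2 * m i ^ 2 := by
        gcongr with i
        rw [sq (m i ^ 2)]
        gcongr
        exacts [hm.nonneg i, hm.le i]
    _ = C ^ 2 * ∑ i, m i ^ 2 := (Finset.mul_sum ..).symm
    _ ≤ C ^ 2 * ((β + C) * T) := by gcongr; exact hm.sum_sq_le hT
    _ = C ^ 2 * (β + C) * T := (mul_assoc ..).symm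

variable (hm : WeightBounds C α β T m) (hT : exp 1 ≤ T) (hC : 8 * (C + C ^ 2) ≤ √T)
include hm hT hC

lemma measureReal_relError_quadratic_le (hα : 0 < α) :
    (gaussianPi ι).real {h | 2 / α * (log T / √T) < |(∑ i, m i * h i ^ 2) / (α * T) - 1|}
      ≤ 2 * exp (2 * (β + C)) * (log T / √T) :=
  measureReal_relError_sum_mul_sq_le hα hT (by linarith [sq_nonneg C])
    (fun i => (abs_of_nonneg (hm.nonneg i)).trans_le (hm.le i)) hm.abs_sum_sub_le
    (hm.sum_sq_le ((Real.one_le_exp zero_le_one).trans hT))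

lemma measureReal_relError_quadratic_sq_le (hβ : 0 < β) :
    (gaussianPi ι).real {h | 2 / β * (log T / √T) < |(∑ i, (m i * h i) ^ 2) / (β * T) - 1|}
      ≤ 2 * exp (2 * (C ^ 2 * (β + C))) * (log T / √T) := by
  simp only [mul_pow]
  refine measureReal_relError_sum_mul_sq_le (C := C + C ^ 2) hβ hT hC (fun i => ?_)
    (hm.abs_sum_sq_sub_le.trans (by linarith [sq_nonneg C]))
    (hm.sum_sq_sq_le ((Real.one_le_exp zero_le_one).trans hT))
  rw [abs_of_nonneg (sq_nonneg _)]
  linarith [pow_le_pow_left₀ (hm.nonneg i) (hm.le i) 2, hm.const_nonneg]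

end WeightBounds

lemma mul_div_sqrt_mul_eq_selfNormalized_mul {α β T A B V N : ℝ} (hα : 0 < α) (hβ : 0 < β)
    (hT : 0 < T) (hV : 0 ≤ V) (hN : V = 0 → N = 0) :
    √(α ^ 2 / β) * √T * (N / √(A * B))
      = N / √V * √(V / (β * T) / (A / (α * T) * (B / (α * T)))) := by
  rcases hV.eq_or_lt' with rfl | hV
  · simp [hN rfl]
  have ratio_eq : V / (β * T) / (A / (α * T) * (B / (α * T))) = V * (α ^ 2 / β * T / (A * B)) := by
    field_simp
  rw [ratio_eq, Real.sqrt_mul hV.le, Real.sqrt_div (by positivity) (A * B),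
    Real.sqrt_mul (by positivity) T]
  field_simp

namespace WeightBounds

variable {C α β T : ℝ} {m : ι → ℝ}

section KolmogorovBound

variable (hm : WeightBounds C α β T m) (hα : 0 < α) (hβ : 0 < β) (hT : exp 1 ≤ T)
  (hC : 8 * (C + C ^ 2) ≤ √T) (hε : (2 / α + 2 / β) * (log T / √T) ≤ 1 / 12)
include hm hα hβ hT hC hε

lemma ne_zero : m ≠ 0 := by
  have T_pos : 0 < T := (exp_pos 1).trans_le hT
  have one_le_log : 1 ≤ log T := (Real.le_log_iff_exp_le T_pos).2 hT
  have sqrt_pos : 0 < √T := Real.sqrt_pos.2 T_pos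
  have rate_le : 2 / β * (1 / √T) ≤ 1 / 12 := by
    refine le_trans ?_ hε
    gcongr
    exact le_add_of_nonneg_left (by positivity)
  have le_mul_sqrt : 24 ≤ β * √T := by
    rw [div_mul_div_comm, mul_one, div_le_div_iff₀ (by positivity) (by norm_num)] at rate_le
    linarith
  have lt_mul : C < β * T :=
    calc C < 24 * √T := by nlinarith [hm.const_nonneg]
      _ ≤ β * √T * √T := by gcongr
      _ = β * T := by rw [mul_assoc, Real.mul_self_sqrt T_pos.le]
  rintro rfl
  have sum_sq_le := (abs_le.1 hm.abs_sum_sq_sub_le).1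
  simp only [Pi.zero_apply, ne_eq, OfNat.ofNat_ne_zero, not_false_eq_true, zero_pow,
    Finset.sum_const_zero] at sum_sq_le
  linarith

lemma measureReal_normalizer_sub_one_le :
    ((gaussianPi ι).prod (gaussianPi ι)).real {p | 4 * ((2 / α + 2 / β) * (log T / √T)) <
        |√((∑ i, (m i * p.1 i) ^ 2) / (β * T)
          / ((∑ i, m i * p.1 i ^ 2) / (α * T) * ((∑ i, m i * p.2 i ^ 2) / (α * T)))) - 1|}
      ≤ (4 * exp (2 * (β + C)) + 2 * exp (2 * (C ^ 2 * (β + C)))) * (log T / √T) := by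
  have rate_nonneg : 0 ≤ log T / √T :=
    div_nonneg (Real.log_nonneg ((Real.one_le_exp zero_le_one).trans hT)) (Real.sqrt_nonneg T)
  set μ := (gaussianPi ι).prod (gaussianPi ι)
  set quadBad := {h : ι → ℝ | 2 / α * (log T / √T) < |(∑ i, m i * h i ^ 2) / (α * T) - 1|}
    with hquadBad
  set sqBad := {h : ι → ℝ | 2 / β * (log T / √T) < |(∑ i, (m i * h i) ^ 2) / (β * T) - 1|}
    with hsqBad
  have quadBad_le : (gaussianPi ι).real quadBad ≤ _ :=
    hm.measureReal_relError_quadratic_le hT hC hα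
  have sqBad_le : (gaussianPi ι).real sqBad ≤ _ :=
    hm.measureReal_relError_quadratic_sq_le hT hC hβ
  have quadBad_meas : MeasurableSet quadBad :=
    measurableSet_lt measurable_const (by fun_prop)
  have sqBad_meas : MeasurableSet sqBad := measurableSet_lt measurable_const (by fun_prop)
  have fst_preserving : MeasurePreserving Prod.fst μ (gaussianPi ι) := measurePreserving_fst
  have snd_preserving : MeasurePreserving Prod.snd μ (gaussianPi ι) := measurePreserving_snd
  have subset_union : {p : (ι → ℝ) × (ι → ℝ) | 4 * ((2 / α + 2 / β) * (log T / √T)) <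
        |√((∑ i, (m i * p.1 i) ^ 2) / (β * T)
          / ((∑ i, m i * p.1 i ^ 2) / (α * T) * ((∑ i, m i * p.2 i ^ 2) / (α * T)))) - 1|}
      ⊆ (Prod.fst ⁻¹' quadBad ∪ Prod.snd ⁻¹' quadBad) ∪ Prod.fst ⁻¹' sqBad := by
    intro p
    contrapose
    simp only [hquadBad, hsqBad, Set.mem_union, Set.mem_preimage, Set.mem_ofPred_eq, not_or,
      not_lt]
    have α_le : 2 / α * (log T / √T) ≤ (2 / α + 2 / β) * (log T / √T) := by
      gcongr; exact le_add_of_nonneg_right (by positivity)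
    have β_le : 2 / β * (log T / √T) ≤ (2 / α + 2 / β) * (log T / √T) := by
      gcongr; exact le_add_of_nonneg_left (by positivity)
    rintro ⟨⟨hA, hB⟩, hV⟩
    exact abs_sqrt_div_mul_sub_one_le hε (hA.trans α_le) (hB.trans α_le) (hV.trans β_le)
  have union_le := (measureReal_mono (μ := μ) subset_union).trans (measureReal_union_le _ _)
  have union_le' := measureReal_union_le (μ := μ) (Prod.fst ⁻¹' quadBad) (Prod.snd ⁻¹' quadBad)
  rw [fst_preserving.measureReal_preimage sqBad_meas.nullMeasurableSet] at union_le
  rw [fst_preserving.measureReal_preimage quadBad_meas.nullMeasurableSet,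
    snd_preserving.measureReal_preimage quadBad_meas.nullMeasurableSet] at union_le'
  linarith

lemma dKol_le :
    dKol (((gaussianPi ι).prod (gaussianPi ι)).map fun p => √(α ^ 2 / β) * √T *
        ((∑ i, m i * p.1 i * p.2 i) / √((∑ i, m i * p.1 i ^ 2) * ∑ i, m i * p.2 i ^ 2)))
      (gaussianReal 0 1)
      ≤ (12 * (2 / α + 2 / β) + 4 * exp (2 * (β + C)) + 2 * exp (2 * (C ^ 2 * (β + C))))
        * (log T / √T) := by
  have T_pos : 0 < T := (exp_pos 1).trans_le hT
  have rate_nonneg : 0 ≤ log T / √T :=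
    div_nonneg (Real.log_nonneg ((Real.one_le_exp zero_le_one).trans hT)) (Real.sqrt_nonneg T)
  have factor (p : (ι → ℝ) × (ι → ℝ)) :=
    mul_div_sqrt_mul_eq_selfNormalized_mul (A := ∑ i, m i * p.1 i ^ 2)
      (B := ∑ i, m i * p.2 i ^ 2) (V := ∑ i, (m i * p.1 i) ^ 2) (N := ∑ i, m i * p.1 i * p.2 i)
      hα hβ T_pos (Finset.sum_nonneg fun _ _ => sq_nonneg _) fun hzero =>
        Finset.sum_eq_zero fun i hi => by
          rw [Finset.sum_eq_zero_iff_of_nonneg fun _ _ => sq_nonneg _] at hzero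
          rw [(pow_eq_zero_iff two_ne_zero).1 (hzero i hi), zero_mul]
  simp only [factor]
  refine (dKol_map_mul_gaussianReal_le (δ := 4 * ((2 / α + 2 / β) * (log T / √T)))
    (hasLaw_selfNormalized_bilinear (hm.ne_zero hα hβ hT hC hε))
    (Measurable.aemeasurable (by fun_prop)) (by positivity) (by linarith)).trans ?_
  linarith [hm.measureReal_normalizer_sub_one_le hα hβ hT hC hε]

end KolmogorovBound

end WeightBounds

end WeightedChiSquare

section SimultaneousDiagonalization

open Matrix

variable {ι : Type*} [Fintype ι] [DecidableEq ι]

/-- `B` and `m` diagonalize the covariance matrix `S` and the quadratic form `Q` simultaneously: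
if `h` is a standard Gaussian vector, then `B h` has covariance `S`, and `Q` is the diagonal form
with weights `m` in the coordinates `h`. -/
structure IsDiagonalization (S Q B : Matrix ι ι ℝ) (m : ι → ℝ) : Prop where
  mul_transpose : B * Bᵀ = S
  transpose_mul_mul : Bᵀ * Q * B = diagonal m

lemma exists_isDiagonalization {S Q : Matrix ι ι ℝ} (hS : S.PosSemidef) (hQ : Q.IsHermitian) :
    ∃ B m, IsDiagonalization S Q B m := by
  obtain ⟨L, hL⟩ : ∃ L : Matrix ι ι ℝ, L * Lᵀ = S := by
    open scoped MatrixOrder in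
    obtain ⟨L, rfl⟩ := CStarAlgebra.nonneg_iff_eq_star_mul_self.1 hS.nonneg
    exact ⟨Lᵀ, by simp [star_eq_conjTranspose]⟩
  have hM : (Lᵀ * Q * L).IsHermitian := by
    simpa using isHermitian_conjTranspose_mul_mul L hQ
  set U : Matrix ι ι ℝ := (hM.eigenvectorUnitary : Matrix ι ι ℝ) with hU
  have mul_transpose_U : U * Uᵀ = 1 := by
    simpa [star_eq_conjTranspose] using mem_unitaryGroup_iff.1 hM.eigenvectorUnitary.2
  have transpose_mul_U : Uᵀ * U = 1 := by
    simpa [star_eq_conjTranspose] using mem_unitaryGroup_iff'.1 hM.eigenvectorUnitary.2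
  set m := hM.eigenvalues
  have spectral : Lᵀ * Q * L = U * diagonal m * Uᵀ := by
    conv_lhs => rw [hM.spectral_theorem, Unitary.conjStarAlgAut_apply]
    simp [hU, m, star_eq_conjTranspose]
  clear_value m U
  refine ⟨L * U, m, ?_, ?_⟩
  · rw [transpose_mul, Matrix.mul_assoc, ← Matrix.mul_assoc U, mul_transpose_U, Matrix.one_mul, hL]
  · calc (L * U)ᵀ * Q * (L * U) = Uᵀ * (Lᵀ * Q * L) * U := by
          rw [transpose_mul]; simp only [Matrix.mul_assoc]
      _ = (Uᵀ * U) * diagonal m * (Uᵀ * U) := by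
          rw [spectral]; simp only [Matrix.mul_assoc]
      _ = diagonal m := by rw [transpose_mul_U, Matrix.one_mul, Matrix.mul_one]

namespace IsDiagonalization

variable {S Q B : Matrix ι ι ℝ} {m : ι → ℝ} (h : IsDiagonalization S Q B m)
include h

lemma dotProduct_mulVec (x y : ι → ℝ) :
    (B *ᵥ x) ⬝ᵥ Q *ᵥ (B *ᵥ y) = ∑ i, m i * x i * y i := by
  have : (B *ᵥ x) ⬝ᵥ Q *ᵥ (B *ᵥ y) = x ⬝ᵥ (Bᵀ * Q * B) *ᵥ y := by
    rw [← mulVec_mulVec, ← mulVec_mulVec, Matrix.dotProduct_mulVec x, vecMul_transpose]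
  rw [this, h.transpose_mul_mul]
  exact Finset.sum_congr rfl fun i _ => by rw [mulVec_diagonal]; ring

lemma eq_dotProduct_mulVec (i : ι) :
    m i = (B *ᵥ Pi.single i 1) ⬝ᵥ Q *ᵥ (B *ᵥ Pi.single i 1) := by
  rw [h.dotProduct_mulVec]
  simp [Pi.single_apply]

lemma sum_eq_trace : ∑ i, m i = (Q * S).trace := by
  rw [← trace_diagonal, ← h.transpose_mul_mul, Matrix.mul_assoc, trace_mul_comm, Matrix.mul_assoc,
    h.mul_transpose]

lemma sum_sq_eq_trace : ∑ i, m i ^ 2 = (Q * S * (Q * S)).trace :=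
  calc ∑ i, m i ^ 2 = (diagonal m * diagonal m).trace := by
        simp only [diagonal_mul_diagonal, trace_diagonal, sq]
    _ = (Bᵀ * (Q * B * Bᵀ * Q * B)).trace := by
        rw [← h.transpose_mul_mul]; simp only [Matrix.mul_assoc]
    _ = (Q * S * (Q * S)).trace := by
        rw [trace_mul_comm, ← h.mul_transpose]; simp only [Matrix.mul_assoc]

lemma nonneg (hQ : ∀ x, 0 ≤ x ⬝ᵥ Q *ᵥ x) (i : ι) : 0 ≤ m i :=
  (h.eq_dotProduct_mulVec i).symm ▸ hQ _

lemma le {ρ : ℝ} (hQ : ∀ x, x ⬝ᵥ Q *ᵥ x ≤ x ⬝ᵥ x) (hρ : 0 ≤ ρ)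
    (hS : ∀ x, x ⬝ᵥ S *ᵥ x ≤ ρ * (x ⬝ᵥ x)) (i : ι) : m i ≤ ρ := by
  set b := B *ᵥ Pi.single i 1
  have m_le : m i ≤ b ⬝ᵥ b := (h.eq_dotProduct_mulVec i).trans_le (hQ b)
  have sq_norm_eq : b ⬝ᵥ b = (Bᵀ *ᵥ b) i := by
    rw [← one_mul ((Bᵀ *ᵥ b) i), ← single_dotProduct,
      Matrix.dotProduct_mulVec (Pi.single i 1), vecMul_transpose]
  have sq_le : (b ⬝ᵥ b) ^ 2 ≤ ρ * (b ⬝ᵥ b) :=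
    calc (b ⬝ᵥ b) ^ 2 = (Bᵀ *ᵥ b) i * (Bᵀ *ᵥ b) i := by rw [← sq_norm_eq, sq]
      _ ≤ (Bᵀ *ᵥ b) ⬝ᵥ (Bᵀ *ᵥ b) :=
          Finset.single_le_sum (f := fun j => (Bᵀ *ᵥ b) j * (Bᵀ *ᵥ b) j)
            (fun j _ => mul_self_nonneg _) (mem_univ i)
      _ = b ⬝ᵥ S *ᵥ b := by
          rw [← h.mul_transpose, ← mulVec_mulVec, Matrix.dotProduct_mulVec b, ← mulVec_transpose]
      _ ≤ ρ * (b ⬝ᵥ b) := hS b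
  nlinarith

end IsDiagonalization

end SimultaneousDiagonalization

section CenteringMatrix

open Matrix

variable {ι : Type*} [Fintype ι]

lemma dotProduct_mulVec_le_of_sum_le {S : Matrix ι ι ℝ} (hS : S.IsSymm) (h₀ : ∀ i j, 0 ≤ S i j)
    {ρ : ℝ} (hρ : ∀ i, ∑ j, S i j ≤ ρ) (x : ι → ℝ) : x ⬝ᵥ S *ᵥ x ≤ ρ * (x ⬝ᵥ x) :=
  calc x ⬝ᵥ S *ᵥ x = ∑ i, ∑ j, S i j * (x i * x j) := by
        simp only [dotProduct, mulVec, Finset.mul_sum, mul_left_comm]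
    _ ≤ ∑ i, ∑ j, (S i j * (x i * x i / 2) + S i j * (x j * x j / 2)) := by
        gcongr with i _ j _
        rw [← mul_add]
        exact mul_le_mul_of_nonneg_left (by linarith [two_mul_le_add_sq (x i) (x j)]) (h₀ i j)
    _ = ∑ i, (∑ j, S i j) * (x i * x i) := by
        simp only [Finset.sum_add_distrib]
        rw [Finset.sum_comm (f := fun i j => S i j * (x j * x j / 2)), ← Finset.sum_add_distrib]
        simp only [← Finset.sum_mul, hS.apply]
        exact Finset.sum_congr rfl fun i _ => by ring
    _ ≤ ∑ i, ρ * (x i * x i) := by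
        gcongr with i
        exacts [mul_self_nonneg _, hρ i]
    _ = ρ * (x ⬝ᵥ x) := (Finset.mul_sum ..).symm

lemma inv_card_mul_sum_le [Nonempty ι] {a : ι → ℝ} {ρ : ℝ} (h : ∀ i, a i ≤ ρ) :
    (Fintype.card ι : ℝ)⁻¹ * ∑ i, a i ≤ ρ := by
  rw [inv_mul_le_iff₀ (by positivity)]
  simpa using Finset.sum_le_card_nsmul univ a ρ fun i _ => h i

variable [DecidableEq ι]

variable (ι) in
/-- The orthogonal projection of `ι → ℝ` onto the vectors with zero sum, so that
`x ⬝ᵥ centeringMatrix ι *ᵥ y` is the empirical covariance of `x` and `y`, not normalized. -/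
def centeringMatrix : Matrix ι ι ℝ :=
  1 - (Fintype.card ι : ℝ)⁻¹ • vecMulVec 1 1

lemma isHermitian_centeringMatrix : (centeringMatrix ι).IsHermitian := by
  ext i j
  simp [centeringMatrix, one_apply, eq_comm]

lemma centeringMatrix_mulVec (y : ι → ℝ) (i : ι) :
    (centeringMatrix ι *ᵥ y) i = y i - (Fintype.card ι : ℝ)⁻¹ * ∑ j, y j := by
  rw [centeringMatrix, sub_mulVec, one_mulVec, smul_mulVec, vecMulVec_mulVec, one_dotProduct]
  simp

lemma centeringMatrix_mul (S : Matrix ι ι ℝ) (i j : ι) :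
    (centeringMatrix ι * S) i j = S i j - (Fintype.card ι : ℝ)⁻¹ * ∑ k, S k j :=
  centeringMatrix_mulVec (S.col j) i

lemma dotProduct_centeringMatrix_mulVec (x y : ι → ℝ) :
    x ⬝ᵥ centeringMatrix ι *ᵥ y
      = x ⬝ᵥ y - (Fintype.card ι : ℝ)⁻¹ * ((∑ i, x i) * ∑ i, y i) := by
  simp only [dotProduct, centeringMatrix_mulVec, mul_sub, Finset.sum_sub_distrib]
  rw [← Finset.sum_mul, mul_left_comm]

lemma dotProduct_centeringMatrix_mulVec_self_nonneg (x : ι → ℝ) :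
    0 ≤ x ⬝ᵥ centeringMatrix ι *ᵥ x := by
  rw [dotProduct_centeringMatrix_mulVec, sub_nonneg]
  refine inv_mul_le_of_le_mul₀ (by positivity)
    (Finset.sum_nonneg fun i _ => mul_self_nonneg (x i)) ?_
  simp only [dotProduct, ← sq]
  exact sq_sum_le_card_mul_sum_sq

lemma dotProduct_centeringMatrix_mulVec_self_le (x : ι → ℝ) :
    x ⬝ᵥ centeringMatrix ι *ᵥ x ≤ x ⬝ᵥ x := by
  rw [dotProduct_centeringMatrix_mulVec, sub_le_self_iff]
  exact mul_nonneg (by positivity) (mul_self_nonneg _)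

variable {S : Matrix ι ι ℝ}

lemma trace_centeringMatrix_mul :
    (centeringMatrix ι * S).trace = S.trace - (Fintype.card ι : ℝ)⁻¹ * ∑ i, ∑ j, S i j := by
  simp only [trace, diag_apply, centeringMatrix_mul, Finset.sum_sub_distrib, Finset.mul_sum]
  rw [Finset.sum_comm (f := fun i k => (Fintype.card ι : ℝ)⁻¹ * S k i)]

lemma trace_centeringMatrix_mul_sq (hS : S.IsSymm) :
    (centeringMatrix ι * S * (centeringMatrix ι * S)).trace
      = ∑ i, ∑ j, S i j ^ 2 - 2 * ((Fintype.card ι : ℝ)⁻¹ * ∑ i, (∑ j, S i j) ^ 2)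
        + ((Fintype.card ι : ℝ)⁻¹ * ∑ i, ∑ j, S i j) ^ 2 := by
  set r : ι → ℝ := fun i => ∑ j, S i j
  have col_sum (j : ι) : ∑ k, S k j = r j := Finset.sum_congr rfl fun k _ => hS.apply j k
  have entry (c : ℝ) (i j : ι) : (S i j - c * r j) * (S j i - c * r i)
      = S i j ^ 2 - c * (S i j * r i) - c * (S i j * r j) + c ^ 2 * (r i * r j) := by
    rw [hS.apply i j]; ring
  have sum_mul_left : ∑ i, ∑ j, S i j * r i = ∑ i, r i ^ 2 := by
    simp only [← Finset.sum_mul, sq, r]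
  have sum_mul_right : ∑ i, ∑ j, S i j * r j = ∑ i, r i ^ 2 := by
    rw [Finset.sum_comm]
    simp only [← Finset.sum_mul, sq, col_sum]
  simp only [trace, diag_apply, mul_apply (M := centeringMatrix ι * S), centeringMatrix_mul,
    col_sum, entry, Finset.sum_add_distrib, Finset.sum_sub_distrib, ← Finset.mul_sum,
    sum_mul_left, sum_mul_right]
  rw [← Finset.sum_mul]
  ring

section RowSums

variable [Nonempty ι] (h₀ : ∀ i j, 0 ≤ S i j) {ρ : ℝ} (hρ : ∀ i, ∑ j, S i j ≤ ρ)
include h₀ hρ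

lemma abs_trace_centeringMatrix_mul_sub_le :
    |(centeringMatrix ι * S).trace - S.trace| ≤ ρ := by
  have mean_nonneg : 0 ≤ (Fintype.card ι : ℝ)⁻¹ * ∑ i, ∑ j, S i j :=
    mul_nonneg (by positivity) (Finset.sum_nonneg fun i _ => Finset.sum_nonneg fun j _ => h₀ i j)
  rw [trace_centeringMatrix_mul, sub_sub_cancel_left, abs_neg, abs_of_nonneg mean_nonneg]
  exact inv_card_mul_sum_le hρ

lemma abs_trace_centeringMatrix_mul_sq_sub_le (hS : S.IsSymm) :
    |(centeringMatrix ι * S * (centeringMatrix ι * S)).trace - ∑ i, ∑ j, S i j ^ 2|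
      ≤ 3 * ρ ^ 2 := by
  have row_nonneg (i : ι) : 0 ≤ ∑ j, S i j := Finset.sum_nonneg fun j _ => h₀ i j
  have mean_nonneg : 0 ≤ (Fintype.card ι : ℝ)⁻¹ * ∑ i, ∑ j, S i j :=
    mul_nonneg (by positivity) (Finset.sum_nonneg fun i _ => row_nonneg i)
  have mean_sq_le : ((Fintype.card ι : ℝ)⁻¹ * ∑ i, ∑ j, S i j) ^ 2 ≤ ρ ^ 2 :=
    pow_le_pow_left₀ mean_nonneg (inv_card_mul_sum_le hρ) 2
  have sq_mean_nonneg : 0 ≤ (Fintype.card ι : ℝ)⁻¹ * ∑ i, (∑ j, S i j) ^ 2 := by positivity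
  have sq_mean_le : (Fintype.card ι : ℝ)⁻¹ * ∑ i, (∑ j, S i j) ^ 2 ≤ ρ ^ 2 :=
    inv_card_mul_sum_le fun i => pow_le_pow_left₀ (row_nonneg i) (hρ i) 2
  rw [trace_centeringMatrix_mul_sq hS, abs_le]
  constructor <;> nlinarith [sq_nonneg ((Fintype.card ι : ℝ)⁻¹ * ∑ i, ∑ j, S i j)]

lemma IsDiagonalization.weightBounds (hS : S.IsSymm) {B : Matrix ι ι ℝ} {m : ι → ℝ}
    (h : IsDiagonalization S (centeringMatrix ι) B m) {C α β T : ℝ}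
    (htrace : |S.trace - α * T| ≤ C - ρ)
    (hsq : |∑ i, ∑ j, S i j ^ 2 - β * T| ≤ C - 3 * ρ ^ 2) : WeightBounds C α β T m where
  nonneg := h.nonneg dotProduct_centeringMatrix_mulVec_self_nonneg
  le i :=
    calc m i ≤ ρ := h.le dotProduct_centeringMatrix_mulVec_self_le
          ((Finset.sum_nonneg fun j _ => h₀ i j).trans (hρ i))
          (dotProduct_mulVec_le_of_sum_le hS h₀ hρ) i
      _ ≤ C := by linarith [(abs_nonneg _).trans htrace]
  abs_sum_sub_le := by
    rw [h.sum_eq_trace]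
    linarith [abs_sub_le (centeringMatrix ι * S).trace S.trace (α * T),
      abs_trace_centeringMatrix_mul_sub_le h₀ hρ]
  abs_sum_sq_sub_le := by
    rw [h.sum_sq_eq_trace]
    linarith [abs_sub_le (centeringMatrix ι * S * (centeringMatrix ι * S)).trace
      (∑ i, ∑ j, S i j ^ 2) (β * T), abs_trace_centeringMatrix_mul_sq_sub_le h₀ hρ hS]

end RowSums

end CenteringMatrix

section GeometricSums

lemma sum_range_pow_dist_mul_one_sub (q : ℝ) (k d : ℕ) :
    (∑ l ∈ range (k + 1 + d), q ^ Nat.dist k l) * (1 - q)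
      = 1 + q - q ^ (k + 1) - q ^ (d + 1) := by
  induction d with
  | zero =>
    have reflect : ∑ l ∈ range (k + 1), q ^ Nat.dist k l = ∑ l ∈ range (k + 1), q ^ l := by
      rw [← Finset.sum_range_reflect]
      refine Finset.sum_congr rfl fun l hl => ?_
      rw [Nat.dist_eq_sub_of_le_right (by omega)]
      congr 1
      have := Finset.mem_range.1 hl
      omega
    rw [add_zero, reflect, zero_add, pow_one]
    linarith [geom_sum_mul q (k + 1)]
  | succ d ih =>
    rw [← add_assoc, Finset.sum_range_succ, add_mul, ih, Nat.dist_eq_sub_of_le (by omega),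
      show k + 1 + d - k = d + 1 by omega]
    ring

variable {q : ℝ} {k n : ℕ}

lemma sum_range_pow_dist (hq : q < 1) (hk : k < n) :
    ∑ l ∈ range n, q ^ Nat.dist k l
      = (1 + q) / (1 - q) - (q ^ (k + 1) + q ^ (n - k)) / (1 - q) := by
  obtain ⟨d, rfl⟩ := Nat.exists_eq_add_of_lt hk
  rw [← sub_div, eq_div_iff (by linarith), show k + d + 1 = k + 1 + d by ring,
    sum_range_pow_dist_mul_one_sub, show k + 1 + d - k = d + 1 by omega]
  ring

variable (hq₀ : 0 ≤ q) (hq₁ : q < 1)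
include hq₀ hq₁

lemma geom_sum_le_inv_one_sub (n : ℕ) : ∑ k ∈ range n, q ^ k ≤ (1 - q)⁻¹ := by
  rw [← tsum_geometric_of_lt_one hq₀ hq₁]
  exact (summable_geometric_of_lt_one hq₀ hq₁).sum_le_tsum _ fun k _ => by positivity

lemma sum_range_pow_dist_le (hk : k < n) : ∑ l ∈ range n, q ^ Nat.dist k l ≤ 2 / (1 - q) := by
  have : 0 < 1 - q := by linarith
  rw [sum_range_pow_dist hq₁ hk, ← sub_div]
  gcongr
  linarith [pow_nonneg hq₀ (k + 1), pow_nonneg hq₀ (n - k)]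

lemma abs_sum_sum_pow_dist_sub_le (n : ℕ) :
    |∑ k ∈ range n, ∑ l ∈ range n, q ^ Nat.dist k l - n * ((1 + q) / (1 - q))|
      ≤ 2 / (1 - q) ^ 2 := by
  have one_sub_pos : 0 < 1 - q := by linarith
  have deficit : ∑ k ∈ range n, ∑ l ∈ range n, q ^ Nat.dist k l - n * ((1 + q) / (1 - q))
      = -((∑ k ∈ range n, q ^ (k + 1) + ∑ k ∈ range n, q ^ (n - k)) / (1 - q)) := by
    rw [Finset.sum_congr rfl fun k hk => sum_range_pow_dist hq₁ (Finset.mem_range.1 hk),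
      Finset.sum_sub_distrib, ← Finset.sum_div _ (fun k => q ^ (k + 1) + q ^ (n - k)),
      Finset.sum_add_distrib]
    simp
  have left_le : ∑ k ∈ range n, q ^ (k + 1) ≤ (1 - q)⁻¹ :=
    calc ∑ k ∈ range n, q ^ (k + 1) ≤ ∑ k ∈ range n, q ^ k :=
          Finset.sum_le_sum fun k _ => pow_le_pow_of_le_one hq₀ hq₁.le k.le_succ
      _ ≤ (1 - q)⁻¹ := geom_sum_le_inv_one_sub hq₀ hq₁ n
  have right_eq : ∑ k ∈ range n, q ^ (n - k) = ∑ k ∈ range n, q ^ (k + 1) := by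
    rw [← Finset.sum_range_reflect]
    refine Finset.sum_congr rfl fun l hl => ?_
    congr 1
    have := Finset.mem_range.1 hl
    omega
  rw [deficit, right_eq, abs_neg, abs_of_nonneg (by positivity)]
  calc _ ≤ ((1 - q)⁻¹ + (1 - q)⁻¹) / (1 - q) := by gcongr
    _ = 2 / (1 - q) ^ 2 := by field_simp; ring

end GeometricSums

section OUCovariance

/-- The covariance function of the Ornstein–Uhlenbeck process with drift parameter `θ` started
at `0`. -/
def ouCov (θ s t : ℝ) : ℝ := (exp (-θ * |t - s|) - exp (-θ * (t + s))) / (2 * θ)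

/-- The covariance matrix of `(√Δ X(kΔ))_{k < n}`, for `X` an Ornstein–Uhlenbeck process. -/
def ouGridCov (θ Δ : ℝ) (n : ℕ) : Matrix (Fin n) (Fin n) ℝ :=
  Matrix.of fun j k => Δ * ouCov θ (j * Δ) (k * Δ)

lemma abs_mul_coth_sub_one_le {x : ℝ} (hx : 0 < x) :
    |x * ((1 + exp (-x) ^ 2) / (1 - exp (-x) ^ 2)) - 1| ≤ x := by
  rw [← Real.exp_nat_mul]
  set r := exp ((2 : ℕ) * -x) with hr
  push_cast at hr
  have lower : 1 - 2 * x ≤ r := by linarith [Real.add_one_le_exp (2 * -x)]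
  have lt_one : r < 1 := by rw [hr, Real.exp_lt_one_iff]; linarith
  have upper : r * (1 + 2 * x) ≤ 1 := by
    have mul_exp : r * exp (2 * x) = 1 := by rw [hr, ← Real.exp_add]; simp
    have : 0 < r := hr ▸ Real.exp_pos _
    nlinarith [Real.add_one_le_exp (2 * x)]
  have one_sub_pos : 0 < 1 - r := by linarith
  rw [show x * ((1 + r) / (1 - r)) - 1 = (x * (1 + r) - (1 - r)) / (1 - r) by field_simp,
    abs_le, ← neg_le, neg_le, le_div_iff₀ one_sub_pos, div_le_iff₀ one_sub_pos]
  constructor <;> nlinarith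

lemma half_le_one_sub_exp_neg {x : ℝ} (h₀ : 0 ≤ x) (h₁ : x ≤ 1) : x / 2 ≤ 1 - exp (-x) := by
  have : exp (-x) ≤ 1 - x / 2 :=
    calc exp (-x) = (exp x)⁻¹ := Real.exp_neg x
      _ ≤ (1 + x)⁻¹ := inv_anti₀ (by linarith) (by linarith [Real.add_one_le_exp x])
      _ ≤ 1 - x / 2 := by rw [inv_le_iff_one_le_mul₀ (by linarith)]; nlinarith
  linarith

lemma ouCov_comm (θ s t : ℝ) : ouCov θ s t = ouCov θ t s := by
  rw [ouCov, ouCov, abs_sub_comm, add_comm]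

variable {θ Δ : ℝ} {n : ℕ}

lemma isSymm_ouGridCov : (ouGridCov θ Δ n).IsSymm :=
  Matrix.IsSymm.ext fun j k => by rw [ouGridCov, Matrix.of_apply, Matrix.of_apply, ouCov_comm]

variable (hΔ : 0 < Δ)
include hΔ

lemma ouGridCov_apply (j k : Fin n) : ouGridCov θ Δ n j k =
    Δ / (2 * θ) * (exp (-(θ * Δ)) ^ Nat.dist j k - exp (-(θ * Δ)) ^ (j + k : ℕ)) := by
  have abs_eq : |((k : ℕ) * Δ : ℝ) - (j : ℕ) * Δ| = Nat.dist j k * Δ := by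
    rw [← sub_mul, abs_mul, abs_of_pos hΔ, abs_sub_comm]
    rcases le_total (j : ℕ) k with h | h
    · rw [Nat.dist_eq_sub_of_le h, Nat.cast_sub h, abs_sub_comm, abs_of_nonneg (by simpa using h)]
    · rw [Nat.dist_eq_sub_of_le_right h, Nat.cast_sub h, abs_of_nonneg (by simpa using h)]
  rw [ouGridCov, Matrix.of_apply, ouCov, abs_eq, ← Real.exp_nat_mul, ← Real.exp_nat_mul]
  push_cast
  ring_nf

variable (hθ : 0 < θ)
include hθ

lemma exp_pow_add_le_exp_pow_dist (j k : ℕ) :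
    exp (-(θ * Δ)) ^ (j + k) ≤ exp (-(θ * Δ)) ^ Nat.dist j k :=
  pow_le_pow_of_le_one (exp_pos _).le (Real.exp_le_one_iff.2 (by nlinarith))
    (by rw [Nat.dist]; omega)

lemma ouGridCov_nonneg (j k : Fin n) : 0 ≤ ouGridCov θ Δ n j k := by
  rw [ouGridCov_apply hΔ]
  exact mul_nonneg (by positivity) (sub_nonneg.2 (exp_pow_add_le_exp_pow_dist hΔ hθ j k))

lemma abs_ouGridCov_sq_sub_le (j k : Fin n) :
    |ouGridCov θ Δ n j k ^ 2 - (Δ / (2 * θ)) ^ 2 * (exp (-(θ * Δ)) ^ 2) ^ Nat.dist j k|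
      ≤ (Δ / (2 * θ)) ^ 2 * (2 * (exp (-(θ * Δ)) ^ (j : ℕ) * exp (-(θ * Δ)) ^ (k : ℕ))) := by
  have dist_le_one : exp (-(θ * Δ)) ^ Nat.dist j k ≤ 1 :=
    pow_le_one₀ (exp_pos _).le (Real.exp_le_one_iff.2 (by nlinarith))
  have add_le_dist := exp_pow_add_le_exp_pow_dist hΔ hθ j k
  have add_pos : 0 < exp (-(θ * Δ)) ^ (j + k : ℕ) := by positivity
  rw [ouGridCov_apply hΔ, mul_pow, ← mul_sub, abs_mul, abs_of_nonneg (sq_nonneg _),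
    ← pow_add, pow_right_comm]
  gcongr
  rw [abs_le]
  constructor <;> nlinarith

variable (hθΔ : θ * Δ ≤ 1)
include hθΔ

lemma mul_inv_one_sub_exp_le : Δ * (1 - exp (-(θ * Δ)))⁻¹ ≤ 2 / θ := by
  have pos : 0 < θ * Δ := by positivity
  have half_le := half_le_one_sub_exp_neg pos.le hθΔ
  rw [← div_eq_mul_inv, div_le_div_iff₀ (by linarith) hθ]
  linarith

lemma mul_inv_one_sub_exp_sq_le : Δ * (1 - exp (-(θ * Δ)) ^ 2)⁻¹ ≤ 2 / θ := by
  have lt_one : exp (-(θ * Δ)) < 1 := Real.exp_lt_one_iff.2 (by nlinarith)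
  have sq_le : exp (-(θ * Δ)) ^ 2 ≤ exp (-(θ * Δ)) :=
    pow_le_of_le_one (exp_pos _).le lt_one.le two_ne_zero
  calc Δ * (1 - exp (-(θ * Δ)) ^ 2)⁻¹ ≤ Δ * (1 - exp (-(θ * Δ)))⁻¹ :=
        mul_le_mul_of_nonneg_left (inv_anti₀ (by linarith) (by linarith)) hΔ.le
    _ ≤ 2 / θ := mul_inv_one_sub_exp_le hΔ hθ hθΔ

lemma sum_ouGridCov_le (j : Fin n) : ∑ k, ouGridCov θ Δ n j k ≤ 2 / θ ^ 2 := by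
  have lt_one : exp (-(θ * Δ)) < 1 := Real.exp_lt_one_iff.2 (by nlinarith)
  calc ∑ k, ouGridCov θ Δ n j k ≤ ∑ k : Fin n, Δ / (2 * θ) * exp (-(θ * Δ)) ^ Nat.dist j k := by
        gcongr with k
        rw [ouGridCov_apply hΔ]
        gcongr
        exact sub_le_self _ (by positivity)
    _ = Δ / (2 * θ) * ∑ k ∈ range n, exp (-(θ * Δ)) ^ Nat.dist j k := by
        rw [Finset.mul_sum, Finset.sum_range]
    _ ≤ Δ / (2 * θ) * (2 / (1 - exp (-(θ * Δ)))) := by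
        gcongr
        exact sum_range_pow_dist_le (exp_pos _).le lt_one j.2
    _ = 1 / θ * (Δ * (1 - exp (-(θ * Δ)))⁻¹) := by field_simp
    _ ≤ 1 / θ * (2 / θ) := by gcongr; exact mul_inv_one_sub_exp_le hΔ hθ hθΔ
    _ = 2 / θ ^ 2 := by field_simp

lemma abs_trace_ouGridCov_sub_le :
    |(ouGridCov θ Δ n).trace - 1 / (2 * θ) * (n * Δ)| ≤ 1 / θ ^ 2 := by
  have lt_one : exp (-(θ * Δ)) ^ 2 < 1 :=
    pow_lt_one₀ (exp_pos _).le (Real.exp_lt_one_iff.2 (by nlinarith)) two_ne_zero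
  have trace_eq : (ouGridCov θ Δ n).trace - 1 / (2 * θ) * (n * Δ)
      = -(1 / (2 * θ) * (Δ * ∑ k ∈ range n, (exp (-(θ * Δ)) ^ 2) ^ k)) := by
    simp only [Matrix.trace, Matrix.diag_apply, ouGridCov_apply hΔ, Nat.dist_self, pow_zero,
      ← two_mul, pow_mul, mul_sub, Finset.sum_sub_distrib, ← Finset.mul_sum, Finset.sum_range]
    simp only [mul_one, Finset.sum_const, card_univ, Fintype.card_fin, nsmul_eq_mul]
    ring
  rw [trace_eq, abs_neg, abs_of_nonneg (by positivity)]
  calc _ ≤ 1 / (2 * θ) * (Δ * (1 - exp (-(θ * Δ)) ^ 2)⁻¹) := by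
        gcongr
        exact geom_sum_le_inv_one_sub (by positivity) lt_one n
    _ ≤ 1 / (2 * θ) * (2 / θ) := by gcongr; exact mul_inv_one_sub_exp_sq_le hΔ hθ hθΔ
    _ = 1 / θ ^ 2 := by field_simp

lemma abs_sum_sum_ouGridCov_sq_sub_le :
    |∑ j, ∑ k, ouGridCov θ Δ n j k ^ 2
        - (Δ / (2 * θ)) ^ 2 * ∑ j ∈ range n, ∑ k ∈ range n, (exp (-(θ * Δ)) ^ 2) ^ Nat.dist j k|
      ≤ 2 / θ ^ 4 := by
  have lt_one : exp (-(θ * Δ)) < 1 := Real.exp_lt_one_iff.2 (by nlinarith)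
  have geom_le : ∑ k ∈ range n, exp (-(θ * Δ)) ^ k ≤ (1 - exp (-(θ * Δ)))⁻¹ :=
    geom_sum_le_inv_one_sub (exp_pos _).le lt_one n
  simp only [Finset.sum_range, Finset.mul_sum, ← Finset.sum_sub_distrib] at geom_le ⊢
  calc _ ≤ ∑ j : Fin n, ∑ k : Fin n,
          (Δ / (2 * θ)) ^ 2 * (2 * (exp (-(θ * Δ)) ^ (j : ℕ) * exp (-(θ * Δ)) ^ (k : ℕ))) :=
        (Finset.abs_sum_le_sum_abs _ _).trans <| Finset.sum_le_sum fun j _ =>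
          (Finset.abs_sum_le_sum_abs _ _).trans <| Finset.sum_le_sum fun k _ =>
            abs_ouGridCov_sq_sub_le hΔ hθ j k
    _ = (Δ / (2 * θ)) ^ 2 * (2 * (∑ k : Fin n, exp (-(θ * Δ)) ^ (k : ℕ)) ^ 2) := by
        simp only [← Finset.mul_sum, ← Finset.sum_mul, sq]
    _ ≤ (Δ / (2 * θ)) ^ 2 * (2 * (1 - exp (-(θ * Δ)))⁻¹ ^ 2) := by gcongr
    _ = 1 / (2 * θ ^ 2) * (Δ * (1 - exp (-(θ * Δ)))⁻¹) ^ 2 := by field_simp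
    _ ≤ 1 / (2 * θ ^ 2) * (2 / θ) ^ 2 := by
        gcongr
        exact mul_inv_one_sub_exp_le hΔ hθ hθΔ
    _ = 2 / θ ^ 4 := by field_simp

lemma abs_sum_sum_exp_pow_dist_sub_le :
    |(Δ / (2 * θ)) ^ 2 * ∑ j ∈ range n, ∑ k ∈ range n, (exp (-(θ * Δ)) ^ 2) ^ Nat.dist j k
        - 1 / (4 * θ ^ 3) * (n * Δ)|
      ≤ 2 / θ ^ 4 + 1 / (4 * θ ^ 2) * (n * Δ * Δ) := by
  have lt_one : exp (-(θ * Δ)) ^ 2 < 1 :=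
    pow_lt_one₀ (exp_pos _).le (Real.exp_lt_one_iff.2 (by nlinarith)) two_ne_zero
  have toeplitz_le := abs_sum_sum_pow_dist_sub_le (sq_nonneg _) lt_one n
  have coth_le := abs_mul_coth_sub_one_le (mul_pos hθ hΔ)
  set W := ∑ j ∈ range n, ∑ k ∈ range n, (exp (-(θ * Δ)) ^ 2) ^ Nat.dist j k
  set H := (1 + exp (-(θ * Δ)) ^ 2) / (1 - exp (-(θ * Δ)) ^ 2)
  calc |(Δ / (2 * θ)) ^ 2 * W - 1 / (4 * θ ^ 3) * (n * Δ)|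
      = |(Δ / (2 * θ)) ^ 2 * (W - n * H) + 1 / (4 * θ ^ 3) * (n * Δ) * (θ * Δ * H - 1)| := by
        congr 1; field_simp; ring
    _ ≤ (Δ / (2 * θ)) ^ 2 * (2 / (1 - exp (-(θ * Δ)) ^ 2) ^ 2)
          + 1 / (4 * θ ^ 3) * (n * Δ) * (θ * Δ) := by
        refine (abs_add_le _ _).trans ?_
        rw [abs_mul, abs_mul, abs_of_nonneg (sq_nonneg (Δ / (2 * θ))),
          abs_of_nonneg (by positivity : 0 ≤ 1 / (4 * θ ^ 3) * (n * Δ))]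
        gcongr
    _ = 1 / (2 * θ ^ 2) * (Δ * (1 - exp (-(θ * Δ)) ^ 2)⁻¹) ^ 2
          + 1 / (4 * θ ^ 2) * (n * Δ * Δ) := by field_simp
    _ ≤ 1 / (2 * θ ^ 2) * (2 / θ) ^ 2 + 1 / (4 * θ ^ 2) * (n * Δ * Δ) := by
        gcongr
        exact mul_inv_one_sub_exp_sq_le hΔ hθ hθΔ
    _ = 2 / θ ^ 4 + 1 / (4 * θ ^ 2) * (n * Δ * Δ) := by field_simp

lemma abs_sum_sq_ouGridCov_sub_le (hn : n * Δ * Δ ≤ 1) :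
    |∑ j, ∑ k, ouGridCov θ Δ n j k ^ 2 - 1 / (4 * θ ^ 3) * (n * Δ)|
      ≤ 4 / θ ^ 4 + 1 / (4 * θ ^ 2) := by
  have step_le : 1 / (4 * θ ^ 2) * (n * Δ * Δ) ≤ 1 / (4 * θ ^ 2) :=
    mul_le_of_le_one_right (by positivity) hn
  refine (abs_sub_le _ ((Δ / (2 * θ)) ^ 2 *
    ∑ j ∈ range n, ∑ k ∈ range n, (exp (-(θ * Δ)) ^ 2) ^ Nat.dist j k) _).trans ?_
  linear_combination abs_sum_sum_ouGridCov_sq_sub_le hΔ hθ hθΔ (n := n)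
    + abs_sum_sum_exp_pow_dist_sub_le hΔ hθ hθΔ (n := n) + step_le

end OUCovariance

open scoped Matrix

section GaussianLinearCombinations

variable {ι κ : Type*} [Fintype ι] [Fintype κ]

lemma eq_map_mulVec_gaussianPi {μ : Measure (ι → ℝ)} [IsProbabilityMeasure μ] {B : Matrix ι κ ℝ}
    (hμ : ∀ c, μ.map (c ⬝ᵥ ·) = gaussianReal 0 (c ⬝ᵥ (B * B.transpose) *ᵥ c).toNNReal) :
    μ = (gaussianPi κ).map (B *ᵥ ·) := by
  classical
  have measurable_mulVec : Measurable (B *ᵥ · : (κ → ℝ) → ι → ℝ) := by fun_prop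
  have := Measure.isProbabilityMeasure_map (μ := gaussianPi κ) measurable_mulVec.aemeasurable
  refine Measure.ext_of_charFunDual (funext fun L => ?_)
  rw [charFunDual_eq_charFun_map_one, charFunDual_eq_charFun_map_one]
  congr 1
  obtain ⟨c, dual_eq⟩ : ∃ c : ι → ℝ, (L : (ι → ℝ) → ℝ) = (c ⬝ᵥ ·) :=
    ⟨fun j => L fun k => if j = k then 1 else 0, funext fun x => by
      rw [← L.coe_coe, LinearMap.pi_apply_eq_sum_univ]
      simp only [dotProduct, smul_eq_mul, mul_comm, L.coe_coe]⟩
  rw [Measure.map_map (by fun_prop) measurable_mulVec, dual_eq, hμ]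
  change _ = (gaussianPi κ).map (fun h => c ⬝ᵥ B *ᵥ h)
  simp only [Matrix.dotProduct_mulVec c B]
  rw [← Matrix.mulVec_mulVec, Matrix.dotProduct_mulVec, Matrix.mulVec_transpose]
  simp only [dotProduct, map_sum_mul_gaussianPi, sq]

lemma integral_dotProduct_sq {α : Type*} [MeasurableSpace α] {μ : Measure α} {x : α → ι → ℝ}
    {S : Matrix ι ι ℝ} (hx : ∀ j, MemLp (x · j) 2 μ)
    (hS : ∀ j k, ∫ a, x a j * x a k ∂μ = S j k) (c : ι → ℝ) :
    ∫ a, (c ⬝ᵥ x a) ^ 2 ∂μ = c ⬝ᵥ S *ᵥ c := by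
  have integrable (j k : ι) : Integrable (fun a => c j * c k * (x a j * x a k)) μ :=
    ((hx j).integrable_mul (hx k)).const_mul _
  calc ∫ a, (c ⬝ᵥ x a) ^ 2 ∂μ = ∫ a, ∑ j, ∑ k, c j * c k * (x a j * x a k) ∂μ := by
        simp only [dotProduct, sq, Finset.sum_mul_sum, mul_mul_mul_comm]
    _ = ∑ j, ∑ k, c j * c k * S j k := by
        rw [integral_finsetSum _ fun j _ => integrable_finsetSum _ fun k _ => integrable j k]
        simp only [integral_finsetSum _ fun k _ => integrable _ k, integral_const_mul, hS]
    _ = c ⬝ᵥ S *ᵥ c := by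
        simp only [dotProduct, Matrix.mulVec, Finset.mul_sum, mul_assoc, mul_comm (S _ _)]

lemma integral_sq_eq_of_map_eq_gaussianReal {α : Type*} [MeasurableSpace α] {μ : Measure α}
    {Z : α → ℝ} {v : ℝ≥0} (hZ : AEMeasurable Z μ) (h : μ.map Z = gaussianReal 0 v) :
    ∫ a, Z a ^ 2 ∂μ = v := by
  rw [← variance_id_gaussianReal (μ := 0) (v := v), variance_eq_integral (by fun_prop), ← h,
    integral_map hZ (by fun_prop), h]
  simp

end GaussianLinearCombinations

/-- The vector `(√Δ Xᵢ(kΔ))_{k < n}` of samples of `Xᵢ`, scaled so that its dot products are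
Riemann sums. -/
def ouGrid (X : Fin 2 → ℝ → Ω → ℝ) (i : Fin 2) (n : ℕ) (Δ : ℝ) (ω : Ω) : Fin n → ℝ :=
  fun k => √Δ * X i (k * Δ) ω

lemma sqrt_mul_mul_sqrt_mul {x : ℝ} (hx : 0 ≤ x) (a b : ℝ) : √x * a * (√x * b) = x * (a * b) := by
  rw [mul_mul_mul_comm, Real.mul_self_sqrt hx]

omit [MeasureSpace Ω] in
lemma ouYtilde_eq_dotProduct (X : Fin 2 → ℝ → Ω → ℝ) (i j : Fin 2) {n : ℕ} (hn : n ≠ 0) {Δ : ℝ}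
    (hΔ : 0 ≤ Δ) (ω : Ω) :
    ouYtilde X i j n Δ ω
      = ouGrid X i n Δ ω ⬝ᵥ centeringMatrix (Fin n) *ᵥ ouGrid X j n Δ ω := by
  have : (n : ℝ) ≠ 0 := by exact_mod_cast hn
  rw [dotProduct_centeringMatrix_mulVec, Fintype.card_fin]
  simp only [ouYtilde, ouXtilde, ouGrid, dotProduct, ← Finset.mul_sum, sqrt_mul_mul_sqrt_mul hΔ,
    Finset.sum_range]
  field_simp

namespace IsOUPair

variable {θ : ℝ} {X : Fin 2 → ℝ → Ω → ℝ} (hX : IsOUPair θ X)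
include hX

lemma measurable_ouGrid (i : Fin 2) (n : ℕ) (Δ : ℝ) : Measurable (ouGrid X i n Δ) :=
  measurable_pi_lambda _ fun _ => (hX.meas i _).const_mul _

lemma exists_map_eq_gaussianReal (i : Fin 2) {t : ℝ} (ht : 0 ≤ t) :
    ∃ v, (ℙ : Measure Ω).map (X i t) = gaussianReal 0 v := by
  simpa using hX.gaussian i 1 (fun _ => t) (fun _ => 1) fun _ => ht

lemma memLp_two (i : Fin 2) {t : ℝ} (ht : 0 ≤ t) : MemLp (X i t) 2 (ℙ : Measure Ω) := by
  obtain ⟨v, hv⟩ := hX.exists_map_eq_gaussianReal i ht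
  have memLp_id := memLp_id_gaussianReal (μ := 0) (v := v) 2
  rw [← hv] at memLp_id
  exact (memLp_map_measure_iff memLp_id.1 (hX.meas i t).aemeasurable).1 memLp_id

variable {Δ : ℝ} (hΔ : 0 ≤ Δ)
include hΔ

lemma integral_dotProduct_ouGrid_sq (i : Fin 2) {n : ℕ} (c : Fin n → ℝ) :
    ∫ ω, (c ⬝ᵥ ouGrid X i n Δ ω) ^ 2 ∂(ℙ : Measure Ω) = c ⬝ᵥ ouGridCov θ Δ n *ᵥ c := by
  have grid_nonneg (j : Fin n) : (0 : ℝ) ≤ j * Δ := by positivity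
  refine integral_dotProduct_sq (fun j => (hX.memLp_two i (grid_nonneg j)).const_mul _)
    (fun j k => ?_) c
  change ∫ ω, √Δ * X i (j * Δ) ω * (√Δ * X i (k * Δ) ω) ∂ℙ = Δ * ouCov θ (j * Δ) (k * Δ)
  simp only [sqrt_mul_mul_sqrt_mul hΔ]
  rw [integral_const_mul, hX.cov i _ _ (grid_nonneg j) (grid_nonneg k)]
  rfl

lemma posSemidef_ouGridCov (n : ℕ) : (ouGridCov θ Δ n).PosSemidef :=
  .of_dotProduct_mulVec_nonneg (Matrix.isHermitian_iff_isSymm.2 isSymm_ouGridCov) fun c => by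
    rw [star_trivial, ← hX.integral_dotProduct_ouGrid_sq hΔ 0]
    exact integral_nonneg fun ω => sq_nonneg _

lemma map_dotProduct_ouGrid (i : Fin 2) {n : ℕ} (c : Fin n → ℝ) :
    (ℙ : Measure Ω).map (fun ω => c ⬝ᵥ ouGrid X i n Δ ω)
      = gaussianReal 0 (c ⬝ᵥ ouGridCov θ Δ n *ᵥ c).toNNReal := by
  obtain ⟨v, hv⟩ := hX.gaussian i n (fun k => k * Δ) (fun k => c k * √Δ) fun k => by positivity
  simp only [mul_assoc] at hv
  change (ℙ : Measure Ω).map (fun ω => c ⬝ᵥ ouGrid X i n Δ ω) = _ at hv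
  have measurable_dotProduct : Measurable fun ω => c ⬝ᵥ ouGrid X i n Δ ω :=
    Finset.measurable_sum _ fun k _ => ((hX.meas i _).const_mul _).const_mul _
  rw [← hX.integral_dotProduct_ouGrid_sq hΔ i,
    integral_sq_eq_of_map_eq_gaussianReal measurable_dotProduct.aemeasurable hv, hv,
    Real.toNNReal_coe]

variable [IsProbabilityMeasure (ℙ : Measure Ω)]

lemma map_ouGrid (i : Fin 2) {n : ℕ} {B : Matrix (Fin n) (Fin n) ℝ}
    (hB : B * B.transpose = ouGridCov θ Δ n) :
    (ℙ : Measure Ω).map (ouGrid X i n Δ) = (gaussianPi (Fin n)).map (B *ᵥ ·) := by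
  have := Measure.isProbabilityMeasure_map (μ := (ℙ : Measure Ω))
    (hX.measurable_ouGrid i n Δ).aemeasurable
  refine eq_map_mulVec_gaussianPi fun c => ?_
  rw [Measure.map_map (by fun_prop) (hX.measurable_ouGrid i n Δ), hB]
  exact hX.map_dotProduct_ouGrid hΔ i c

lemma map_ouGrid_prodMk {n : ℕ} {B : Matrix (Fin n) (Fin n) ℝ}
    (hB : B * B.transpose = ouGridCov θ Δ n) :
    (ℙ : Measure Ω).map (fun ω => (ouGrid X 0 n Δ ω, ouGrid X 1 n Δ ω))
      = ((gaussianPi (Fin n)).prod (gaussianPi (Fin n))).map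
          (Prod.map (B *ᵥ ·) (B *ᵥ ·)) := by
  have measurable_sample :
      Measurable fun (f : ℝ → ℝ) (k : Fin n) => √Δ * f (k * Δ) := by fun_prop
  have indep : IndepFun (ouGrid X 0 n Δ) (ouGrid X 1 n Δ) (ℙ : Measure Ω) :=
    hX.indep.comp measurable_sample measurable_sample
  rw [(indepFun_iff_map_prod_eq_prod_map_map (hX.measurable_ouGrid 0 n Δ).aemeasurable
      (hX.measurable_ouGrid 1 n Δ).aemeasurable).1 indep, hX.map_ouGrid hΔ 0 hB,
    hX.map_ouGrid hΔ 1 hB, Measure.map_prod_map _ _ (by fun_prop) (by fun_prop)]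

lemma map_ouRhoTilde {n : ℕ} (hn : n ≠ 0) (r : ℝ) {B : Matrix (Fin n) (Fin n) ℝ} {m : Fin n → ℝ}
    (h : IsDiagonalization (ouGridCov θ Δ n) (centeringMatrix (Fin n)) B m) :
    (ℙ : Measure Ω).map (fun ω => r * ouRhoTilde X n Δ ω)
      = ((gaussianPi (Fin n)).prod (gaussianPi (Fin n))).map fun p =>
          r * ((∑ i, m i * p.1 i * p.2 i)
            / √((∑ i, m i * p.1 i ^ 2) * ∑ i, m i * p.2 i ^ 2)) := by
  let ρ (p : (Fin n → ℝ) × (Fin n → ℝ)) : ℝ :=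
    p.1 ⬝ᵥ centeringMatrix (Fin n) *ᵥ p.2 / √((p.1 ⬝ᵥ centeringMatrix (Fin n) *ᵥ p.1)
      * (p.2 ⬝ᵥ centeringMatrix (Fin n) *ᵥ p.2))
  have measurable_rho : Measurable fun p => r * ρ p := by
    simp only [ρ, dotProduct, Matrix.mulVec]
    fun_prop
  calc (ℙ : Measure Ω).map (fun ω => r * ouRhoTilde X n Δ ω)
      = ((ℙ : Measure Ω).map fun ω => (ouGrid X 0 n Δ ω, ouGrid X 1 n Δ ω)).map
          fun p => r * ρ p := by
        rw [Measure.map_map measurable_rho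
          ((hX.measurable_ouGrid 0 n Δ).prodMk (hX.measurable_ouGrid 1 n Δ))]
        simp only [ouRhoTilde, ouYtilde_eq_dotProduct X _ _ hn hΔ, Function.comp_def, ρ]
    _ = _ := by
        rw [hX.map_ouGrid_prodMk hΔ h.mul_transpose, Measure.map_map measurable_rho
          (Measurable.prodMap (by fun_prop) (by fun_prop))]
        simp only [Function.comp_def, Prod.map, ρ, h.dotProduct_mulVec, sq, mul_assoc]

end IsOUPair

lemma tendsto_log_div_sqrt_atTop : Tendsto (fun T : ℝ => log T / √T) atTop (𝓝 0) := by
  simpa only [Real.sqrt_eq_rpow] using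
    (isLittleO_log_rpow_atTop (by norm_num : (0 : ℝ) < 1 / 2)).tendsto_div_nhds_zero

lemma weightBounds_of_isDiagonalization_ouGridCov {θ T : ℝ} {n : ℕ} (hθ : 0 < θ) (hT : 0 < T)
    (hn : n ≠ 0) (hθT : θ * (T / n) ≤ 1) (hTT : T * (T / n) ≤ 1) {B : Matrix (Fin n) (Fin n) ℝ}
    {m : Fin n → ℝ}
    (h : IsDiagonalization (ouGridCov θ (T / n) n) (centeringMatrix (Fin n)) B m) :
    WeightBounds (16 / θ ^ 4 + 4 / θ ^ 2) (1 / (2 * θ)) (1 / (4 * θ ^ 3)) T m := by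
  have : NeZero n := ⟨hn⟩
  have n_mul : n * (T / n) = T := by field_simp
  have hΔ : 0 < T / n := by positivity
  have trace_le := abs_trace_ouGridCov_sub_le hΔ hθ hθT (n := n)
  have sum_sq_le := abs_sum_sq_ouGridCov_sub_le hΔ hθ hθT (n := n) (by rwa [n_mul])
  rw [n_mul] at trace_le sum_sq_le
  refine h.weightBounds (ouGridCov_nonneg hΔ hθ) (sum_ouGridCov_le hΔ hθ hθT) isSymm_ouGridCov
    (trace_le.trans ?_) (sum_sq_le.trans ?_)
  · rw [← sub_nonneg, show 16 / θ ^ 4 + 4 / θ ^ 2 - 2 / θ ^ 2 - 1 / θ ^ 2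
      = 16 / θ ^ 4 + 1 / θ ^ 2 by ring]
    positivity
  · rw [← sub_nonneg, show 16 / θ ^ 4 + 4 / θ ^ 2 - 3 * (2 / θ ^ 2) ^ 2
      - (4 / θ ^ 4 + 1 / (4 * θ ^ 2)) = 15 / (4 * θ ^ 2) by ring]
    positivity

theorem IsOUPair.exists_dKol_ouRhoTilde_le [IsProbabilityMeasure (ℙ : Measure Ω)] {θ : ℝ}
    (hθ : 0 < θ) {X : Fin 2 → ℝ → Ω → ℝ} (hX : IsOUPair θ X) :
    ∃ c, 0 < c ∧ ∀ᶠ T : ℝ in atTop, ∀ n : ℕ, n ≠ 0 → θ * (T / n) ≤ 1 → T * (T / n) ≤ 1 →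
      dKol ((ℙ : Measure Ω).map fun ω => √θ * √T * ouRhoTilde X n (T / n) ω) (gaussianReal 0 1)
        ≤ c * (log T / √T) := by
  set C := 16 / θ ^ 4 + 4 / θ ^ 2
  set α := 1 / (2 * θ) with hα
  set β := 1 / (4 * θ ^ 3) with hβ
  have hα₀ : 0 < α := by positivity
  have hβ₀ : 0 < β := by positivity
  have log_div_sqrt_small : ∀ᶠ T : ℝ in atTop, (2 / α + 2 / β) * (log T / √T) ≤ 1 / 12 :=
    (tendsto_log_div_sqrt_atTop.const_mul _).eventually_le_const (by norm_num)
  refine ⟨12 * (2 / α + 2 / β) + 4 * exp (2 * (β + C)) + 2 * exp (2 * (C ^ 2 * (β + C))),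
    by positivity, ?_⟩
  filter_upwards [eventually_ge_atTop (exp 1), log_div_sqrt_small,
    tendsto_sqrt_atTop.eventually_ge_atTop (8 * (C + C ^ 2))]
    with T exp_le_T log_small sqrt_large n hn hθT hTT
  have hT : 0 < T := (exp_pos 1).trans_le exp_le_T
  obtain ⟨B, m, h⟩ := exists_isDiagonalization
    (hX.posSemidef_ouGridCov (Δ := T / n) (by positivity) n) isHermitian_centeringMatrix
  have bounds : WeightBounds C α β T m :=
    weightBounds_of_isDiagonalization_ouGridCov hθ hT hn hθT hTT h
  have ratio_eq : α ^ 2 / β = θ := by rw [hα, hβ]; field_simp; norm_num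
  rw [hX.map_ouRhoTilde (by positivity) hn _ h]
  simpa only [ratio_eq] using bounds.dKol_le hα₀ hβ₀ exp_le_T sqrt_large log_small

section RiemannSum

variable {E : Type*} [NormedAddCommGroup E] [NormedSpace ℝ E] [CompleteSpace E] {f : ℝ → E}
  {a b Δ ε : ℝ}

lemma norm_smul_sub_intervalIntegral_le (hΔ : 0 ≤ Δ) (hf : ContinuousOn f (Set.Icc a (a + Δ)))
    (hε : ∀ x ∈ Set.Icc a (a + Δ), ‖f a - f x‖ ≤ ε) :
    ‖Δ • f a - ∫ x in a..a + Δ, f x‖ ≤ ε * Δ := by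
  have ha : a ≤ a + Δ := le_add_of_nonneg_right hΔ
  have const_eq : Δ • f a = ∫ _ in a..a + Δ, f a := by simp
  rw [const_eq, ← intervalIntegral.integral_sub (by simp) (hf.intervalIntegrable_of_Icc ha)]
  refine (intervalIntegral.norm_integral_le_of_norm_le_const fun x hx =>
    hε x (Set.Ioc_subset_Icc_self (Set.uIoc_of_le ha ▸ hx))).trans_eq ?_
  rw [add_sub_cancel_left, abs_of_nonneg hΔ]

lemma norm_riemannSum_sub_intervalIntegral_le (hΔ : 0 ≤ Δ) (n : ℕ)
    (hf : ContinuousOn f (Set.Icc a (a + n * Δ)))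
    (hε : ∀ x ∈ Set.Icc a (a + n * Δ), ∀ y ∈ Set.Icc a (a + n * Δ), |x - y| ≤ Δ →
      ‖f x - f y‖ ≤ ε) :
    ‖Δ • ∑ k ∈ range n, f (a + k * Δ) - ∫ x in a..a + n * Δ, f x‖ ≤ ε * (n * Δ) := by
  induction n with
  | zero => simp
  | succ n ih =>
    have end_eq : a + (n + 1 : ℕ) * Δ = a + n * Δ + Δ := by push_cast; ring
    rw [end_eq] at hf hε ⊢
    have left_le : a ≤ a + n * Δ := le_add_of_nonneg_right (by positivity)
    have mid_le : a + n * Δ ≤ a + n * Δ + Δ := le_add_of_nonneg_right hΔ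
    have first_sub : Set.Icc a (a + n * Δ) ⊆ Set.Icc a (a + n * Δ + Δ) :=
      Set.Icc_subset_Icc_right mid_le
    have last_sub : Set.Icc (a + n * Δ) (a + n * Δ + Δ) ⊆ Set.Icc a (a + n * Δ + Δ) :=
      Set.Icc_subset_Icc_left left_le
    have first := ih (hf.mono first_sub) fun x hx y hy => hε x (first_sub hx) y (first_sub hy)
    have last := norm_smul_sub_intervalIntegral_le hΔ (hf.mono last_sub) fun x hx =>
      hε _ (first_sub ⟨left_le, le_rfl⟩) x (last_sub hx)
        (abs_sub_le_iff.2 ⟨by linarith [hx.1], by linarith [hx.2]⟩)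
    rw [Finset.sum_range_succ, smul_add, ← intervalIntegral.integral_add_adjacent_intervals
      ((hf.mono first_sub).intervalIntegrable_of_Icc left_le)
      ((hf.mono last_sub).intervalIntegrable_of_Icc mid_le), add_sub_add_comm]
    refine (norm_add_le_of_le first last).trans_eq ?_
    push_cast
    ring

lemma tendsto_riemannSum (hab : a ≤ b) (hf : ContinuousOn f (Set.Icc a b)) :
    Tendsto (fun n : ℕ => ((b - a) / n) • ∑ k ∈ range n, f (a + k * ((b - a) / n))) atTop
      (𝓝 (∫ x in a..b, f x)) := by
  rw [Metric.tendsto_nhds]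
  intro ε hε
  have uniform := isCompact_Icc.uniformContinuousOn_of_continuous hf
  obtain ⟨δ, δ_pos, hδ⟩ := Metric.uniformContinuousOn_iff.1 uniform (ε / (b - a + 1))
    (div_pos hε (by linarith))
  have mesh_lt : ∀ᶠ n : ℕ in atTop, (b - a) / n < δ :=
    (tendsto_const_div_atTop_nhds_zero_nat (b - a)).eventually_lt_const δ_pos
  filter_upwards [eventually_ne_atTop 0, mesh_lt] with n hn mesh_lt
  have end_eq : a + n * ((b - a) / n) = b := by field_simp; ring
  have bound := norm_riemannSum_sub_intervalIntegral_le (f := f) (a := a)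
    (Δ := (b - a) / n) (ε := ε / (b - a + 1)) (div_nonneg (sub_nonneg.2 hab) n.cast_nonneg) n
    (by rwa [end_eq]) (by
      rw [end_eq]
      intro x hx y hy hxy
      exact (dist_eq_norm (f x) (f y) ▸ hδ x hx y hy (hxy.trans_lt mesh_lt)).le)
  rw [end_eq, mul_div_cancel₀ _ (by exact_mod_cast hn)] at bound
  rw [dist_eq_norm]
  refine bound.trans_lt ?_
  rw [div_mul_eq_mul_div, div_lt_iff₀ (by linarith)]
  nlinarith

end RiemannSum

lemma integral_sq_sub_sq_average_pos {f : ℝ → ℝ} {a b x y : ℝ} (hab : a < b)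
    (hf : ContinuousOn f (Set.Icc a b)) (hx : x ∈ Set.Icc a b) (hy : y ∈ Set.Icc a b)
    (hxy : f x ≠ f y) :
    0 < (∫ u in a..b, f u * f u)
      - (b - a) * (1 / (b - a) * ∫ u in a..b, f u) * (1 / (b - a) * ∫ u in a..b, f u) := by
  set A := 1 / (b - a) * ∫ u in a..b, f u with hA
  have int_eq : ∫ u in a..b, f u = (b - a) * A := by
    rw [hA, one_div, mul_inv_cancel_left₀ (sub_pos.2 hab).ne']
  have intf : IntervalIntegrable f volume a b := hf.intervalIntegrable_of_Icc hab.le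
  have intff : IntervalIntegrable (fun u => f u * f u) volume a b :=
    (hf.mul hf).intervalIntegrable_of_Icc hab.le
  have eq_integral_sq :
      (∫ u in a..b, f u * f u) - (b - a) * A * A = ∫ u in a..b, (f u - A) ^ 2 := by
    have expand : ∀ u, (f u - A) ^ 2 = f u * f u - 2 * A * f u + A ^ 2 := fun u => by ring
    simp only [expand]
    rw [intervalIntegral.integral_add (intff.sub (intf.const_mul _)) (by simp),
      intervalIntegral.integral_sub intff (intf.const_mul _),
      intervalIntegral.integral_const_mul, int_eq, intervalIntegral.integral_const, smul_eq_mul]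
    ring
  have exists_ne : ∃ u ∈ Set.Icc a b, f u ≠ A := by
    by_contra! h
    exact hxy ((h x hx).trans (h y hy).symm)
  obtain ⟨u, hu, u_ne⟩ := exists_ne
  rw [eq_integral_sq]
  exact intervalIntegral.integral_pos hab ((hf.sub continuousOn_const).pow 2)
    (fun _ _ => sq_nonneg _) ⟨u, hu, sq_pos_of_ne_zero (sub_ne_zero.2 u_ne)⟩

namespace IsOUPair

variable {θ : ℝ} {X : Fin 2 → ℝ → Ω → ℝ} {T : ℝ}

lemma ae_ne_zero (hX : IsOUPair θ X) (hθ : 0 < θ) (hT : 0 < T) (i : Fin 2) :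
    ∀ᵐ ω ∂(ℙ : Measure Ω), X i T ω ≠ 0 := by
  obtain ⟨v, law⟩ := hX.exists_map_eq_gaussianReal i hT.le
  have meas := (hX.meas i T).aemeasurable (μ := ℙ)
  have v_eq : (v : ℝ) = (1 - exp (-(2 * θ * T))) / (2 * θ) := by
    rw [← integral_sq_eq_of_map_eq_gaussianReal meas law]
    simp only [sq]
    rw [hX.cov i T T hT.le hT.le]
    simp only [sub_self, abs_zero, mul_zero, exp_zero]
    ring_nf
  have v_pos : (0 : ℝ) < v := by
    rw [v_eq]
    have : exp (-(2 * θ * T)) < 1 := by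
      rw [exp_lt_one_iff, neg_lt_zero]; positivity
    exact div_pos (by linarith) (by positivity)
  have := nullSingletonClass_gaussianReal (μ := 0) (NNReal.coe_pos.1 v_pos).ne'
  exact ae_of_ae_map (p := (· ≠ 0)) meas (law ▸ Measure.ae_ne _ 0)

lemma ae_ouY_self_pos (hX : IsOUPair θ X) (hθ : 0 < θ) (hT : 0 < T) (i : Fin 2) :
    ∀ᵐ ω ∂(ℙ : Measure Ω), 0 < ouY X i i T ω := by
  filter_upwards [hX.cont, hX.ae_ne_zero hθ hT i] with ω cont ne_zero
  have := integral_sq_sub_sq_average_pos hT ((cont i).mono Set.Icc_subset_Ici_self)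
    (Set.right_mem_Icc.2 hT.le) (Set.left_mem_Icc.2 hT.le) (by rwa [hX.init])
  rwa [sub_zero] at this

lemma measurable_ouYtilde (hX : IsOUPair θ X) (i j : Fin 2) (n : ℕ) (Δ : ℝ) :
    Measurable (ouYtilde X i j n Δ) := by
  have := hX.meas
  unfold ouYtilde ouXtilde
  fun_prop

lemma measurable_ouRhoTilde (hX : IsOUPair θ X) (n : ℕ) (Δ : ℝ) :
    Measurable (ouRhoTilde X n Δ) :=
  (hX.measurable_ouYtilde 0 1 n Δ).div
    ((hX.measurable_ouYtilde 0 0 n Δ).mul (hX.measurable_ouYtilde 1 1 n Δ)).sqrt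

end IsOUPair

section GridRefinement

variable {θ : ℝ} {X : Fin 2 → ℝ → Ω → ℝ} {T : ℝ}

omit [MeasureSpace Ω] in
lemma tendsto_ouXtilde {ω : Ω} {i : Fin 2} (hT : 0 < T)
    (hi : ContinuousOn (fun t => X i t ω) (Set.Icc 0 T)) :
    Tendsto (fun n : ℕ => ouXtilde X i n (T / n) ω) atTop (𝓝 (ouXbar X i T ω)) := by
  refine ((tendsto_riemannSum hT.le hi).const_mul (1 / T)).congr fun n => ?_
  simp only [ouXtilde, smul_eq_mul, sub_zero, zero_add]
  field_simp

omit [MeasureSpace Ω] in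
lemma tendsto_ouYtilde {ω : Ω} {i j : Fin 2} (hT : 0 < T)
    (hi : ContinuousOn (fun t => X i t ω) (Set.Icc 0 T))
    (hj : ContinuousOn (fun t => X j t ω) (Set.Icc 0 T)) :
    Tendsto (fun n : ℕ => ouYtilde X i j n (T / n) ω) atTop (𝓝 (ouY X i j T ω)) := by
  refine ((tendsto_riemannSum hT.le (hi.mul hj)).sub
    (((tendsto_ouXtilde hT hi).const_mul T).mul (tendsto_ouXtilde hT hj))).congr' ?_
  filter_upwards [eventually_ne_atTop 0] with n hn
  have : (n : ℝ) ≠ 0 := by exact_mod_cast hn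
  simp only [ouYtilde, Pi.mul_apply, smul_eq_mul, sub_zero, zero_add, mul_div_cancel₀ T this]

lemma IsOUPair.ae_tendsto_ouRhoTilde (hX : IsOUPair θ X) (hθ : 0 < θ) (hT : 0 < T) :
    ∀ᵐ ω ∂(ℙ : Measure Ω),
      Tendsto (fun n : ℕ => ouRhoTilde X n (T / n) ω) atTop (𝓝 (ouRho X T ω)) := by
  filter_upwards [hX.cont, hX.ae_ouY_self_pos hθ hT 0, hX.ae_ouY_self_pos hθ hT 1]
    with ω cont pos₀ pos₁
  have tendsto_Y : ∀ i j, Tendsto (fun n : ℕ => ouYtilde X i j n (T / n) ω) atTop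
      (𝓝 (ouY X i j T ω)) := fun i j =>
    tendsto_ouYtilde hT ((cont i).mono Set.Icc_subset_Ici_self)
      ((cont j).mono Set.Icc_subset_Ici_self)
  exact (tendsto_Y 0 1).div ((tendsto_Y 0 0).mul (tendsto_Y 1 1)).sqrt
    (Real.sqrt_pos.2 (mul_pos pos₀ pos₁)).ne'

lemma dKol_map_le_of_tendsto_ae {α : Type*} [MeasurableSpace α] {μ : Measure α}
    [IsProbabilityMeasure μ] {ν : Measure ℝ} [IsProbabilityMeasure ν] {Z : ℕ → α → ℝ} {Z' : α → ℝ}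
    (hZ : ∀ n, Measurable (Z n)) (hlim : ∀ᵐ a ∂μ, Tendsto (fun n => Z n a) atTop (𝓝 (Z' a)))
    {ε : ℝ} (hε : ∀ᶠ n in atTop, dKol (μ.map (Z n)) ν ≤ ε) : dKol (μ.map Z') ν ≤ ε :=
  dKol_le_of_tendsto ((tendstoInMeasure_of_tendsto_ae (fun n => (hZ n).aestronglyMeasurable)
    hlim).tendstoInDistribution fun n => (hZ n).aemeasurable).tendsto hε

theorem IsOUPair.exists_dKol_ouRho_le [IsProbabilityMeasure (ℙ : Measure Ω)]
    (hX : IsOUPair θ X) (hθ : 0 < θ) :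
    ∃ c, 0 < c ∧ ∀ᶠ T : ℝ in atTop,
      dKol ((ℙ : Measure Ω).map fun ω => √θ * √T * ouRho X T ω) (gaussianReal 0 1)
        ≤ c * (log T / √T) := by
  obtain ⟨c, c_pos, discrete⟩ := hX.exists_dKol_ouRhoTilde_le hθ
  refine ⟨c, c_pos, ?_⟩
  filter_upwards [discrete, eventually_gt_atTop 0] with T discrete hT
  have mesh_small : ∀ r : ℝ, ∀ᶠ n : ℕ in atTop, r * (T / n) ≤ 1 := fun r =>
    ((tendsto_const_div_atTop_nhds_zero_nat T).const_mul r).eventually_le_const (by simp)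
  refine dKol_map_le_of_tendsto_ae (Z := fun n ω => √θ * √T * ouRhoTilde X n (T / n) ω)
    (fun n => (hX.measurable_ouRhoTilde n _).const_mul _)
    ((hX.ae_tendsto_ouRhoTilde hθ hT).mono fun ω h => h.const_mul _) ?_
  filter_upwards [eventually_ne_atTop 0, mesh_small θ, mesh_small T] with n hn hθn hTn
    using discrete n hn hθn hTn

end GridRefinement

/-- there are `c(θ) > 0` and `T₀ ≥ 1` such that for all `T ≥ T₀`,
`d_Kol(√θ·√T·ρ(T), N(0,1)) ≤ c(θ)·ln(T)/√T`; in particular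
`√θ·√T·ρ(T) ⇒ N(0,1)` as `T → ∞`. -/
theorem stmt_7 (θ : ℝ) (hθ : 0 < θ) [IsProbabilityMeasure (ℙ : Measure Ω)]
    (X : Fin 2 → ℝ → Ω → ℝ) (hX : IsOUPair θ X) :
    (∃ c : ℝ, 0 < c ∧ ∃ T₀ : ℝ, 1 ≤ T₀ ∧ ∀ T : ℝ, T₀ ≤ T →
      dKol (Measure.map (fun ω => Real.sqrt θ * Real.sqrt T * ouRho X T ω) ℙ)
          (gaussianReal 0 1)
        ≤ c * Real.log T / Real.sqrt T) ∧
    Tendsto (fun T : ℝ =>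
        dKol (Measure.map (fun ω => Real.sqrt θ * Real.sqrt T * ouRho X T ω) ℙ)
          (gaussianReal 0 1)) atTop (𝓝 0) := by
  obtain ⟨c, c_pos, bound⟩ := hX.exists_dKol_ouRho_le hθ
  constructor
  · obtain ⟨T₀, bound⟩ := eventually_atTop.1 bound
    refine ⟨c, c_pos, max T₀ 1, le_max_right _ _, fun T hT => ?_⟩
    exact (bound T ((le_max_left _ _).trans hT)).trans_eq (mul_div_assoc _ _ _).symm
  · refine squeeze_zero' (Eventually.of_forall fun T => dKol_nonneg _ _) bound ?_
    simpa only [mul_zero] using tendsto_log_div_sqrt_atTop.const_mul c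

end
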